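/- arXiv:1011.0795 — 2 statements merged into one kernel-verified Lean document; each statement's English description precedes it below -/
import Mathlib

section
/- The number of standard Young tableaux of shifted staircase shape (n, n-1, ..., 1) with the single box in the upper right corner removed equals g_n * C_n * C_{n-2} / (2 * C_{2n-3}), where g_n = binom(n+1,2)! / prod_{0 <= i < j <= n} (i+j) and C_m is the m-th Catalan number. -/
open Finset
open scoped Classical

noncomputable section

/-- Cells of the skew Young diagram `lam / mu` (0-indexed: cell `(i,j)` with `mu i ≤ j < lam i`). -/
def skewCells (lam mu : ℕ →₀ ℕ) : Finset (ℕ × ℕ) :=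
  lam.support.biUnion fun i =>
    ((Finset.range (lam i)).filter fun j => mu i ≤ j).image fun j => (i, j)

/-- A finitely supported function is a partition if it is antitone. -/
def IsPartition (l : ℕ →₀ ℕ) : Prop := ∀ i j : ℕ, i ≤ j → l j ≤ l i

/-- The type of all integer partitions. -/
def Ptn : Type := {l : ℕ →₀ ℕ // IsPartition l}

/-- Semistandard condition: rows weakly increase, columns strictly increase. -/
def IsSSYT (lam mu : ℕ →₀ ℕ) (n : ℕ) (T : skewCells lam mu → Fin n) : Prop :=
  ∀ c c' : skewCells lam mu,
    ((c : ℕ × ℕ).1 = (c' : ℕ × ℕ).1 → (c : ℕ × ℕ).2 ≤ (c' : ℕ × ℕ).2 → T c ≤ T c') ∧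
    ((c : ℕ × ℕ).2 = (c' : ℕ × ℕ).2 → (c : ℕ × ℕ).1 < (c' : ℕ × ℕ).1 → T c < T c')

/-- The (skew) Schur polynomial `s_{lam/mu}` in `n` variables, evaluated at `u`. -/
def skewSchur {R : Type*} [CommSemiring R] (n : ℕ) (lam mu : ℕ →₀ ℕ) (u : Fin n → R) : R :=
  ∑ T ∈ Finset.univ.filter (IsSSYT lam mu n), ∏ c : skewCells lam mu, u (T c)

/-- The number of standard Young tableaux of an arbitrary (truncated) diagram `D`:
bijective fillings increasing along rows and down columns. -/
def sytCard (D : Finset (ℕ × ℕ)) : ℕ :=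
  (Finset.univ.filter fun T : D → Fin D.card => Function.Bijective T ∧
    ∀ c c' : D, ((c : ℕ × ℕ).1 = (c' : ℕ × ℕ).1 → (c : ℕ × ℕ).2 < (c' : ℕ × ℕ).2 → T c < T c') ∧
      ((c : ℕ × ℕ).2 = (c' : ℕ × ℕ).2 → (c : ℕ × ℕ).1 < (c' : ℕ × ℕ).1 → T c < T c')).card

/-- Complete homogeneous symmetric polynomial of degree `s` in `p` variables, evaluated at `u`. -/
def hpoly {R : Type*} [CommSemiring R] (p s : ℕ) (u : Fin p → R) : R :=
  ∑ f ∈ Finset.univ.filter (fun f : Fin s → Fin p => Monotone f), ∏ t, u (f t)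

/-- The rectangular partition `(p^k)`. -/
def rectPtn (k p : ℕ) : ℕ →₀ ℕ :=
  Finsupp.onFinset (Finset.range k) (fun i => if i < k then p else 0)
    (fun a ha => by
      simp only [Finset.mem_range]
      by_contra h
      simp [h] at ha)

/-- Plane partition of shape `D`: supported on `D`, weakly decreasing along rows and columns. -/
def IsPPofShape (D : Finset (ℕ × ℕ)) (T : ℕ × ℕ → ℕ) : Prop :=
  (∀ c, c ∉ D → T c = 0) ∧ ∀ c ∈ D, ∀ c' ∈ D,
    (c.1 = c'.1 → c.2 ≤ c'.2 → T c' ≤ T c) ∧ (c.2 = c'.2 → c.1 ≤ c'.1 → T c' ≤ T c)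

/-!
Removing the cell of the largest entry gives a recursion for the number of standard tableaux of a
shifted diagram. Schur's product formula satisfies it, by the Lagrange interpolation identity for
the nodes `s (s - 1)` of the parts `s`.

Encode a shifted diagram inside the staircase by its set `V` of row lengths. Complementing `V`
reverses the removal of cells, so that the removal operator is self-adjoint for the pairing
`∑ f V * g Vᶜ`. Paired with Schur's formula, whose defect in the recursion is concentrated at the
empty diagram, the defect of an arbitrary `f` therefore recovers the value of `f` at the staircase.

Take for `f` the number of tableaux with truncated first row, cut off to `0` as soon as the shape
has lost the pivot cell, which is the one diagonally below and to the left of the missing corner.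
While the pivot is present, the missing corner does not create a new removable cell, so the defect
of `f` sits only on the shapes where the pivot is being removed. This leaves a sum of products of
two values of Schur's formula, which a convolution of binomial coefficients evaluates.
-/

section StandardFillings

variable {α : Type*} (r : α → α → Prop)

/-- The standard fillings of `D` by the entries `0, …, k - 1`, for an arbitrary relation `r` along
which entries have to increase. There are none unless `k = #D`. -/
def standardFillings (D : Finset α) (k : ℕ) : Set (D ≃ Fin k) :=
  {e | ∀ x y : D, r x y → e x < e y}

/-- The elements of `D` which can carry the largest entry of a standard filling. -/
def terminalElements (D : Finset α) : Finset α :=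
  {c ∈ D | ∀ x ∈ D, ¬ r c x}

variable {r}

lemma mem_terminalElements {D : Finset α} {c : α} :
    c ∈ terminalElements r D ↔ c ∈ D ∧ ∀ x ∈ D, ¬ r c x :=
  Finset.mem_filter

lemma symm_last_mem_terminalElements {D : Finset α} {k : ℕ} {e : D ≃ Fin (k + 1)}
    (he : e ∈ standardFillings r D (k + 1)) :
    (e.symm (Fin.last k) : α) ∈ terminalElements r D := by
  refine mem_terminalElements.2 ⟨(e.symm _).2, fun x hx hr ↦ ?_⟩
  have hlt := he _ ⟨x, hx⟩ hr
  rw [e.apply_symm_apply] at hlt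
  exact hlt.not_ge (Fin.le_last _)

variable [DecidableEq α]

/-- A finite set with a marked element `c`, which becomes `none`. -/
def optionEraseEquiv {D : Finset α} {c : α} (hc : c ∈ D) : Option ↥(D.erase c) ≃ D :=
  (Finset.subtypeInsertEquivOption (Finset.notMem_erase c D)).symm.trans
    (Equiv.subtypeEquivRight fun x ↦ by rw [Finset.insert_erase hc])

/-- Bijections from `D` that take their largest value at `c` are bijections from `D.erase c`. -/
def equivEraseOfApplyLast {D : Finset α} {c : α} (hc : c ∈ D) (k : ℕ) :
    {e : D ≃ Fin (k + 1) // e ⟨c, hc⟩ = Fin.last k} ≃ (↥(D.erase c) ≃ Fin k) :=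
  (((optionEraseEquiv hc).symm.equivCongr (Equiv.refl _)).subtypeEquiv fun _ ↦ Iff.rfl).trans <|
    (Equiv.optionSubtype (Fin.last k)).trans <|
      (Equiv.refl _).equivCongr (finSuccAboveEquiv (Fin.last k)).symm

lemma castSucc_equivEraseOfApplyLast {D : Finset α} {c : α} (hc : c ∈ D) {k : ℕ}
    (e : {e : D ≃ Fin (k + 1) // e ⟨c, hc⟩ = Fin.last k}) (x : ↥(D.erase c)) :
    (equivEraseOfApplyLast hc k e x).castSucc = e.1 ⟨x, Finset.mem_of_mem_erase x.2⟩ := by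
  rw [← Fin.succAbove_last]
  exact congrArg Subtype.val ((finSuccAboveEquiv (Fin.last k)).apply_symm_apply _)

lemma equivEraseOfApplyLast_mem_standardFillings {D : Finset α} {c : α}
    (hc : c ∈ terminalElements r D) {k : ℕ}
    (e : {e : D ≃ Fin (k + 1) // e ⟨c, (mem_terminalElements.1 hc).1⟩ = Fin.last k}) :
    equivEraseOfApplyLast _ k e ∈ standardFillings r (D.erase c) k ↔
      e.1 ∈ standardFillings r D (k + 1) := by
  obtain ⟨hcD, hmax⟩ := mem_terminalElements.1 hc
  constructor
  · intro he x y hxy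
    have hx : (x : α) ≠ c := fun h ↦ hmax y y.2 (h ▸ hxy)
    by_cases hy : (y : α) = c
    · obtain rfl : y = ⟨c, hcD⟩ := Subtype.ext hy
      rw [e.2, Fin.lt_last_iff_ne_last]
      exact fun h ↦ hx (congrArg Subtype.val (e.1.injective (h.trans e.2.symm)))
    · have := he ⟨x, Finset.mem_erase.2 ⟨hx, x.2⟩⟩ ⟨y, Finset.mem_erase.2 ⟨hy, y.2⟩⟩ hxy
      rwa [← Fin.castSucc_lt_castSucc_iff, castSucc_equivEraseOfApplyLast,
        castSucc_equivEraseOfApplyLast] at this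
  · intro he x y hxy
    rw [← Fin.castSucc_lt_castSucc_iff, castSucc_equivEraseOfApplyLast,
      castSucc_equivEraseOfApplyLast]
    exact he _ _ hxy

theorem card_standardFillings_succ (D : Finset α) (k : ℕ) :
    Nat.card (standardFillings r D (k + 1)) =
      ∑ c ∈ terminalElements r D, Nat.card (standardFillings r (D.erase c) k) := by
  let last (e : standardFillings r D (k + 1)) : terminalElements r D :=
    ⟨e.1.symm (Fin.last k), symm_last_mem_terminalElements e.2⟩
  have fiber (c : terminalElements r D) :
      {e // last e = c} ≃ standardFillings r (D.erase c) k :=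
    have hc := (mem_terminalElements.1 c.2).1
    calc
      _ ≃ {e : standardFillings r D (k + 1) // e.1 ⟨c, hc⟩ = Fin.last k} :=
        Equiv.subtypeEquivRight fun e ↦ by
          rw [← Equiv.eq_symm_apply, Subtype.ext_iff, Subtype.ext_iff, eq_comm]
      _ ≃ {e : {e : D ≃ Fin (k + 1) // e ⟨c, hc⟩ = Fin.last k} //
          e.1 ∈ standardFillings r D (k + 1)} :=
        ⟨fun e ↦ ⟨⟨e.1.1, e.2⟩, e.1.2⟩, fun e ↦ ⟨⟨e.1.1, e.2⟩, e.1.2⟩,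
          fun _ ↦ rfl, fun _ ↦ rfl⟩
      _ ≃ standardFillings r (D.erase c) k :=
        (equivEraseOfApplyLast hc k).subtypeEquiv fun e ↦
          (equivEraseOfApplyLast_mem_standardFillings c.2 e).symm
  rw [Nat.card_congr (Equiv.sigmaFiberEquiv last).symm, Nat.card_sigma,
    ← Finset.sum_coe_sort (terminalElements r D)]
  exact Finset.sum_congr rfl fun c _ ↦ Nat.card_congr (fiber c)

end StandardFillings

/-- The relation along which the entries of a tableau increase: `c'` lies to the right of `c` in
the same row, or below `c` in the same column. -/
def CellLT (c c' : ℕ × ℕ) : Prop :=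
  c.1 = c'.1 ∧ c.2 < c'.2 ∨ c.2 = c'.2 ∧ c.1 < c'.1

theorem sytCard_eq_natCard (D : Finset (ℕ × ℕ)) :
    sytCard D = Nat.card (standardFillings CellLT D #D) := by
  rw [sytCard, ← Fintype.card_subtype, ← Nat.card_eq_fintype_card]
  refine Nat.card_congr ((Equiv.subtypeSubtypeEquivSubtypeInter _ _).symm.trans
    (Equiv.bijectiveEquiv.subtypeEquiv fun T ↦ ?_))
  refine ⟨?_, ?_⟩
  · rintro h c c' (⟨h₁, h₂⟩ | ⟨h₁, h₂⟩)
    exacts [(h c c').1 h₁ h₂, (h c c').2 h₁ h₂]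
  · exact fun h c c' ↦ ⟨fun h₁ h₂ ↦ h c c' (.inl ⟨h₁, h₂⟩), fun h₁ h₂ ↦ h c c' (.inr ⟨h₁, h₂⟩)⟩

lemma sytCard_empty : sytCard ∅ = 1 := by
  rw [sytCard_eq_natCard, Nat.card_eq_one_iff_unique]
  exact ⟨⟨fun e e' ↦ Subtype.ext (Equiv.ext fun x ↦ (notMem_empty _ x.2).elim)⟩,
    ⟨⟨Finset.equivFin ∅, fun x ↦ (notMem_empty _ x.2).elim⟩⟩⟩

theorem sytCard_eq_sum {D : Finset (ℕ × ℕ)} (hD : D.Nonempty) :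
    sytCard D = ∑ c ∈ terminalElements CellLT D, sytCard (D.erase c) := by
  obtain ⟨k, hk⟩ := Nat.exists_eq_succ_of_ne_zero hD.card_ne_zero
  rw [sytCard_eq_natCard, hk, card_standardFillings_succ]
  refine sum_congr rfl fun c hc ↦ ?_
  rw [sytCard_eq_natCard, card_erase_of_mem (mem_terminalElements.1 hc).1, hk,
    Nat.succ_sub_one]

section LagrangeInterpolation

open Polynomial in
theorem sum_prod_sub_div_prod_erase_sub {ι F : Type*} [DecidableEq ι] [Field F] {S : Finset ι}
    {y : ι → F} (z : ι → F) (hy : Set.InjOn y S) :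
    ∑ i ∈ S, (∏ j ∈ S, (y i - z j)) / ∏ j ∈ S.erase i, (y i - y j) =
      ∑ i ∈ S, y i - ∑ i ∈ S, z i := by
  rcases S.eq_empty_or_nonempty with rfl | hS
  · simp
  have monic (w : ι → F) : (∏ j ∈ S, (X - C (w j))).Monic :=
    monic_prod_of_monic _ _ fun i _ ↦ monic_X_sub_C _
  have degree_eq (w : ι → F) : (∏ j ∈ S, (X - C (w j))).degree = (#S : WithBot ℕ) := by
    simp [degree_prod]
  -- Compare the coefficients of degree `#S - 1` in the interpolation of this polynomial at `y`.
  let Q : F[X] := ∏ j ∈ S, (X - C (z j)) - ∏ j ∈ S, (X - C (y j))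
  have degree_lt : Q.degree < #S := (degree_eq z).symm ▸
    degree_sub_lt_left ((degree_eq z).trans (degree_eq y).symm) (monic z).ne_zero
      ((monic z).leadingCoeff.trans (monic y).leadingCoeff.symm)
  have eval_Q {i : ι} (hi : i ∈ S) : Q.eval (y i) = ∏ j ∈ S, (y i - z j) := by
    simp [Q, eval_prod, prod_eq_zero hi]
  have coeff_Q : Q.coeff (#S - 1) = ∑ i ∈ S, y i - ∑ i ∈ S, z i := by
    rw [coeff_sub, prod_X_sub_C_coeff_card_pred _ _ hS.card_pos,
      prod_X_sub_C_coeff_card_pred _ _ hS.card_pos, neg_sub_neg]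
  rw [← coeff_Q, Lagrange.coeff_eq_sum hy degree_lt]
  exact sum_congr rfl fun i hi ↦ by rw [eval_Q hi]

theorem sum_mul_prod_erase_div_eq_sum {S : Finset ℕ} (h0 : 0 ∉ S) :
    ∑ s ∈ S, (s : ℚ) * ∏ j ∈ S.erase s, ((s - 1 - j) * (s + j) : ℚ) / ((s - 1 + j) * (s - j)) =
      ∑ s ∈ S, (s : ℚ) := by
  let y (s : ℕ) : ℚ := s * (s - 1)
  let z (s : ℕ) : ℚ := s * (s + 1)
  have y_injOn : Set.InjOn y S := by
    intro a ha b hb hab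
    have ha1 : (1 : ℚ) ≤ a := mod_cast Nat.one_le_iff_ne_zero.2 (ne_of_mem_of_not_mem ha h0)
    have hb1 : (1 : ℚ) ≤ b := mod_cast Nat.one_le_iff_ne_zero.2 (ne_of_mem_of_not_mem hb h0)
    have h : ((a : ℚ) - b) * (a + b - 1) = 0 := by linear_combination hab
    rcases mul_eq_zero.1 h with h | h
    · exact_mod_cast sub_eq_zero.1 h
    · linarith
  have key := sum_prod_sub_div_prod_erase_sub z y_injOn
  have sum_yz : ∑ s ∈ S, y s - ∑ s ∈ S, z s = -2 * ∑ s ∈ S, (s : ℚ) := by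
    rw [← sum_sub_distrib, mul_sum]
    exact sum_congr rfl fun s _ ↦ by ring
  refine mul_left_cancel₀ (by norm_num : (-2 : ℚ) ≠ 0) ?_
  rw [← sum_yz, ← key, mul_sum]
  refine sum_congr rfl fun s hs ↦ ?_
  rw [← mul_prod_erase _ _ hs, mul_div_assoc, ← prod_div_distrib, ← mul_assoc]
  congr 1
  · ring
  · exact prod_congr rfl fun j _ ↦ by congr 1 <;> ring

end LagrangeInterpolation

section SchurFormula

open scoped Nat

/-- The contribution `|i - j| / (i + j)` of two parts to Schur's product formula. -/
def pairFactor (i j : ℕ) : ℚ := |(i : ℚ) - j| / (i + j)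

/-- Schur's product formula for the number of standard tableaux of the shifted diagram whose set
of row lengths is `S`. -/
def schurCount (S : Finset ℕ) : ℚ :=
  (∑ i ∈ S, i)! / (∏ i ∈ S, (i ! : ℚ)) * ∏ i ∈ S, ∏ j ∈ S with j < i, pairFactor i j

lemma pairFactor_comm (i j : ℕ) : pairFactor i j = pairFactor j i := by
  rw [pairFactor, pairFactor, abs_sub_comm, add_comm]

lemma pairFactor_zero_left {j : ℕ} (hj : j ≠ 0) : pairFactor 0 j = 1 := by
  simp [pairFactor, hj]

lemma pairFactor_eq_mul_pairFactor_succ {a j : ℕ} (h₁ : j ≠ a) (h₂ : j ≠ a + 1) :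
    pairFactor a j =
      pairFactor (a + 1) j * (((a - j) * (a + 1 + j) : ℚ) / ((a + j) * (a + 1 - j))) := by
  have h_abs : |(a : ℚ) - j| * (a + 1 - j) = |(a : ℚ) + 1 - j| * (a - j) := by
    rcases lt_or_gt_of_ne h₁ with h | h
    · have : (j : ℚ) < a := mod_cast h
      rw [abs_of_pos (by linarith), abs_of_pos (by linarith), mul_comm]
    · have : (a : ℚ) + 1 < j := mod_cast (show a + 1 < j by omega)
      rw [abs_of_neg (by linarith), abs_of_neg (by linarith)]
      ring
  have h_sub : (a : ℚ) + 1 - j ≠ 0 := sub_ne_zero.2 (mod_cast h₂.symm)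
  have h_add : (a : ℚ) + j ≠ 0 := mod_cast (show a + j ≠ 0 by omega)
  have h_add' : (a : ℚ) + 1 + j ≠ 0 := by positivity
  rw [pairFactor, pairFactor]
  push_cast
  field_simp
  linear_combination h_abs

lemma schurCount_empty : schurCount ∅ = 1 := by simp [schurCount]

theorem schurCount_insert {a : ℕ} {T : Finset ℕ} (ha : a ∉ T) :
    schurCount (insert a T) =
      (a + ∑ i ∈ T, i).choose a * (∏ j ∈ T, pairFactor a j) * schurCount T := by
  have h_pairs : ∏ i ∈ insert a T, ∏ j ∈ insert a T with j < i, pairFactor i j =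
      (∏ j ∈ T, pairFactor a j) * ∏ i ∈ T, ∏ j ∈ T with j < i, pairFactor i j := by
    simp only [prod_filter, prod_insert ha, lt_irrefl, if_false, one_mul, prod_mul_distrib]
    rw [← mul_assoc, ← prod_mul_distrib]
    congr 1
    refine prod_congr rfl fun j hj ↦ ?_
    rcases lt_or_gt_of_ne (ne_of_mem_of_not_mem hj ha) with h | h
    · simp only [h, h.not_gt, if_true, if_false, mul_one]
    · simp only [h, h.not_gt, if_true, if_false, one_mul, pairFactor_comm]
  rw [schurCount, schurCount, h_pairs, sum_insert ha, prod_insert ha, Nat.cast_add_choose]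
  field_simp

lemma schurCount_erase_zero (S : Finset ℕ) : schurCount (S.erase 0) = schurCount S := by
  by_cases h : 0 ∈ S
  · conv_rhs => rw [← insert_erase h, schurCount_insert (notMem_erase _ _)]
    rw [prod_congr rfl fun j hj ↦ pairFactor_zero_left (ne_of_mem_erase hj)]
    simp
  · rw [erase_eq_of_notMem h]

/-- The parts of the strict partition `S` which can be decreased by one. -/
def removableParts (S : Finset ℕ) : Finset ℕ := {s ∈ S | s - 1 ∉ S}

/-- The strict partition `S` with the part `s` decreased by one, where a part `0` is dropped. -/
def decrPart (s : ℕ) (S : Finset ℕ) : Finset ℕ := (insert (s - 1) (S.erase s)).erase 0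

lemma mem_removableParts {S : Finset ℕ} {s : ℕ} : s ∈ removableParts S ↔ s ∈ S ∧ s - 1 ∉ S :=
  mem_filter

lemma removableParts_subset (S : Finset ℕ) : removableParts S ⊆ S := filter_subset _ _

lemma mem_decrPart {S : Finset ℕ} {s x : ℕ} :
    x ∈ decrPart s S ↔ x ≠ 0 ∧ (x = s - 1 ∨ x ≠ s ∧ x ∈ S) := by
  rw [decrPart, mem_erase, mem_insert, mem_erase]

lemma zero_notMem_decrPart (s : ℕ) (S : Finset ℕ) : 0 ∉ decrPart s S := notMem_erase _ _

lemma ne_zero_of_mem_removableParts {S : Finset ℕ} {s : ℕ} (hs : s ∈ removableParts S) : s ≠ 0 := by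
  rintro rfl
  exact (mem_removableParts.1 hs).2 (mem_removableParts.1 hs).1

lemma sum_decrPart_add_one {S : Finset ℕ} {s : ℕ} (hs : s ∈ removableParts S) :
    ∑ i ∈ decrPart s S, i + 1 = ∑ i ∈ S, i := by
  have hs0 := ne_zero_of_mem_removableParts hs
  obtain ⟨hsS, hpred⟩ := mem_removableParts.1 hs
  rw [decrPart, sum_erase (f := fun i ↦ i) _ rfl, sum_insert fun h ↦ hpred (mem_of_mem_erase h),
    ← add_sum_erase _ _ hsS]
  omega

lemma schurCount_decrPart_mul_sum {S : Finset ℕ} {s : ℕ} (hs : s ∈ removableParts S) :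
    schurCount (decrPart s S) * ∑ i ∈ S, (i : ℚ) = schurCount S *
      (s * ∏ j ∈ S.erase s, ((s - 1 - j) * (s + j) : ℚ) / ((s - 1 + j) * (s - j))) := by
  obtain ⟨a, rfl⟩ := Nat.exists_eq_add_one_of_ne_zero (ne_zero_of_mem_removableParts hs)
  obtain ⟨hsS, haS⟩ := mem_removableParts.1 hs
  rw [decrPart, schurCount_erase_zero, Nat.add_sub_cancel]
  obtain ⟨T, hsT, rfl⟩ : ∃ T, a + 1 ∉ T ∧ insert (a + 1) T = S :=
    ⟨S.erase (a + 1), notMem_erase _ _, insert_erase hsS⟩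
  have haT : a ∉ T := fun h ↦ haS (mem_insert_of_mem h)
  have h_pairs : ∏ j ∈ T, pairFactor a j = (∏ j ∈ T, pairFactor (a + 1) j) *
      ∏ j ∈ T, ((a - j) * (a + 1 + j) : ℚ) / ((a + j) * (a + 1 - j)) := by
    rw [← prod_mul_distrib]
    exact prod_congr rfl fun j hj ↦ pairFactor_eq_mul_pairFactor_succ
      (ne_of_mem_of_not_mem hj haT) (ne_of_mem_of_not_mem hj hsT)
  have h_choose : ((a + ∑ i ∈ T, i).choose a : ℚ) * (a + 1 + ∑ i ∈ T, i) =
      (a + 1 + ∑ i ∈ T, i).choose (a + 1) * (a + 1) := by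
    have := Nat.add_one_mul_choose_eq (a + ∑ i ∈ T, i) a
    rw [add_right_comm] at this
    exact_mod_cast (mul_comm _ _).trans this
  rw [erase_insert hsT, schurCount_insert haT, schurCount_insert hsT,
    sum_insert hsT, h_pairs]
  push_cast at h_choose ⊢
  simp only [add_sub_cancel_right]
  linear_combination (∏ j ∈ T, pairFactor (a + 1) j) *
    (∏ j ∈ T, ((a - j) * (a + 1 + j) : ℚ) / ((a + j) * (a + 1 - j))) * schurCount T * h_choose

theorem schurCount_eq_sum {S : Finset ℕ} (h0 : 0 ∉ S) (hS : S.Nonempty) :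
    schurCount S = ∑ s ∈ removableParts S, schurCount (decrPart s S) := by
  have sum_pos : 0 < ∑ i ∈ S, (i : ℚ) := sum_pos
    (fun i hi ↦ Nat.cast_pos.2 (Nat.pos_of_ne_zero (ne_of_mem_of_not_mem hi h0))) hS
  refine mul_right_cancel₀ sum_pos.ne' ?_
  rw [sum_mul, sum_congr rfl fun s hs ↦ schurCount_decrPart_mul_sum hs, ← mul_sum,
    ← sum_mul_prod_erase_div_eq_sum h0]
  congr 1
  refine (sum_subset (removableParts_subset S) fun s hs hs' ↦ ?_).symm
  have hpred : s - 1 ∈ S.erase s := by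
    have hs0 := ne_of_mem_of_not_mem hs h0
    exact mem_erase.2 ⟨by omega, by_contra fun h ↦ hs' (mem_removableParts.2 ⟨hs, h⟩)⟩
  have hcast : ((s - 1 : ℕ) : ℚ) = s - 1 :=
    Nat.cast_pred (Nat.pos_of_ne_zero (ne_of_mem_of_not_mem hs h0))
  rw [prod_eq_zero hpred (by rw [hcast]; simp), mul_zero]

end SchurFormula

section ShiftedDiagram

/-- The number of parts of `S` greater than `d`, which is the number of cells on the `d`-th diagonal
of the shifted diagram of `S`. -/
def numGT (S : Finset ℕ) (d : ℕ) : ℕ := #{s ∈ S | d < s}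

/-- The shifted diagram whose set of row lengths is `S`, described by its diagonals. -/
def shiftedDiagram (S : Finset ℕ) : Finset (ℕ × ℕ) :=
  (range (S.sup id)).biUnion fun d ↦ (range (numGT S d)).image fun i ↦ (i, i + d)

lemma numGT_pos {S : Finset ℕ} {d : ℕ} : 0 < numGT S d ↔ ∃ s ∈ S, d < s := by
  rw [numGT, card_pos, filter_nonempty_iff]

lemma numGT_eq_zero {S : Finset ℕ} {d : ℕ} (h : ∀ s ∈ S, s ≤ d) : numGT S d = 0 :=
  card_eq_zero.2 (filter_eq_empty_iff.2 fun s hs ↦ (h s hs).not_gt)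

lemma mem_shiftedDiagram {S : Finset ℕ} {c : ℕ × ℕ} :
    c ∈ shiftedDiagram S ↔ c.1 ≤ c.2 ∧ c.1 < numGT S (c.2 - c.1) := by
  simp only [shiftedDiagram, mem_biUnion, mem_image, mem_range]
  constructor
  · rintro ⟨d, -, i, hi, rfl⟩
    exact ⟨Nat.le_add_right i d, by rwa [Nat.add_sub_cancel_left]⟩
  · rintro ⟨hle, hlt⟩
    obtain ⟨s, hs, hds⟩ := numGT_pos.1 (Nat.zero_lt_of_lt hlt)
    exact ⟨c.2 - c.1, hds.trans_le (le_sup (f := id) hs), c.1, hlt,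
      Prod.ext rfl (Nat.add_sub_cancel' hle)⟩

lemma numGT_eq_sum (S : Finset ℕ) (d : ℕ) : numGT S d = ∑ s ∈ S, if d < s then 1 else 0 :=
  card_filter _ _

lemma numGT_eq_numGT_succ (S : Finset ℕ) (d : ℕ) :
    numGT S d = numGT S (d + 1) + if d + 1 ∈ S then 1 else 0 := by
  rw [numGT_eq_sum, numGT_eq_sum, ← sum_ite_eq' S (d + 1) fun _ ↦ 1, ← sum_add_distrib]
  refine sum_congr rfl fun s _ ↦ ?_
  split_ifs <;> omega

lemma numGT_antitone (S : Finset ℕ) : Antitone (numGT S) := fun _ _ h ↦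
  card_le_card (monotone_filter_right S fun _ _ ↦ h.trans_lt)

lemma numGT_le_numGT_add (S : Finset ℕ) (d k : ℕ) : numGT S d ≤ numGT S (d + k) + k := by
  induction k with
  | zero => rfl
  | succ k ih =>
    have h := numGT_eq_numGT_succ S (d + k)
    rw [add_assoc] at h
    split_ifs at h <;> omega

lemma numGT_eq_numGT_decrPart {S : Finset ℕ} {s : ℕ} (hs : s ∈ removableParts S) (d : ℕ) :
    numGT S d = numGT (decrPart s S) d + if d + 1 = s then 1 else 0 := by
  obtain ⟨hsS, hpred⟩ := mem_removableParts.1 hs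
  rw [numGT_eq_sum, numGT_eq_sum, decrPart,
    sum_erase (f := fun s ↦ if d < s then 1 else 0) _ (if_neg d.not_lt_zero),
    sum_insert fun h ↦ hpred (mem_of_mem_erase h), ← add_sum_erase _ _ hsS]
  split_ifs <;> omega

/-- The last cell in the row of length `s` of the shifted diagram of `S`. -/
def cornerCell (S : Finset ℕ) (s : ℕ) : ℕ × ℕ := (numGT S s, numGT S s + (s - 1))

lemma cornerCell_injOn {S : Finset ℕ} (h0 : 0 ∉ S) : Set.InjOn (cornerCell S) S := by
  intro a ha b hb hab
  have ha0 := ne_of_mem_of_not_mem ha h0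
  have hb0 := ne_of_mem_of_not_mem hb h0
  simp only [cornerCell, Prod.mk.injEq] at hab
  omega

lemma mem_terminalElements_shiftedDiagram {S : Finset ℕ} {i d : ℕ} :
    (i, i + d) ∈ terminalElements CellLT (shiftedDiagram S) ↔
      i < numGT S d ∧ numGT S (d + 1) ≤ i ∧ (d ≠ 0 → numGT S (d - 1) ≤ i + 1) := by
  simp only [mem_terminalElements, mem_shiftedDiagram, Nat.le_add_right, true_and,
    Nat.add_sub_cancel_left]
  refine and_congr_right fun _ ↦ ⟨fun h ↦ ⟨?_, fun hd ↦ ?_⟩, ?_⟩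
  · by_contra! hlt
    refine h (i, i + d + 1) ⟨by omega, ?_⟩ (.inl ⟨rfl, Nat.lt_succ_self _⟩)
    rwa [add_assoc, Nat.add_sub_cancel_left]
  · by_contra! hlt
    refine h (i + 1, i + d) ⟨by omega, ?_⟩ (.inr ⟨rfl, Nat.lt_succ_self _⟩)
    rwa [show i + d - (i + 1) = d - 1 by omega]
  · rintro ⟨h_right, h_below⟩ ⟨i', j'⟩ ⟨hle, hlt⟩ (⟨rfl, hj⟩ | ⟨rfl, hi⟩)
    · dsimp only at hle hlt hj
      have := numGT_antitone S (show d + 1 ≤ j' - i by omega)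
      omega
    · dsimp only at hle hlt hi
      have := numGT_le_numGT_add S (i + d - i') (i' - i - 1)
      rw [show i + d - i' + (i' - i - 1) = d - 1 by omega] at this
      omega

lemma terminalElements_shiftedDiagram {S : Finset ℕ} (h0 : 0 ∉ S) :
    terminalElements CellLT (shiftedDiagram S) = (removableParts S).image (cornerCell S) := by
  ext ⟨i, j⟩
  rw [mem_image]
  constructor
  · intro h
    obtain ⟨d, rfl : j = i + d⟩ := Nat.exists_eq_add_of_le
      (mem_shiftedDiagram.1 (mem_terminalElements.1 h).1).1
    obtain ⟨hlt, h_right, h_below⟩ := mem_terminalElements_shiftedDiagram.1 h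
    have h_succ := numGT_eq_numGT_succ S d
    have hd : d + 1 ∈ S := by
      by_contra hd
      rw [if_neg hd] at h_succ
      omega
    rw [if_pos hd] at h_succ
    refine ⟨d + 1, mem_removableParts.2 ⟨hd, fun hdS ↦ ?_⟩, ?_⟩
    · obtain ⟨e, rfl⟩ := Nat.exists_eq_add_one_of_ne_zero (ne_of_mem_of_not_mem hdS h0)
      have h_pred := numGT_eq_numGT_succ S e
      rw [if_pos (by rwa [Nat.add_sub_cancel] at hdS)] at h_pred
      have := h_below e.add_one_ne_zero
      rw [Nat.add_sub_cancel] at this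
      omega
    · rw [cornerCell, show numGT S (d + 1) = i by omega, Nat.add_sub_cancel]
  · rintro ⟨s, hs, hij⟩
    obtain ⟨d, rfl⟩ := Nat.exists_eq_add_one_of_ne_zero (ne_zero_of_mem_removableParts hs)
    obtain ⟨hd, hpred⟩ := mem_removableParts.1 hs
    have h_succ := numGT_eq_numGT_succ S d
    rw [if_pos hd] at h_succ
    rw [← hij, cornerCell, Nat.add_sub_cancel, mem_terminalElements_shiftedDiagram]
    refine ⟨by omega, le_rfl, fun hd0 ↦ ?_⟩
    obtain ⟨e, rfl⟩ := Nat.exists_eq_add_one_of_ne_zero hd0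
    have h_pred := numGT_eq_numGT_succ S e
    rw [if_neg (by rwa [Nat.add_sub_cancel] at hpred)] at h_pred
    rw [Nat.add_sub_cancel]
    omega

lemma erase_cornerCell_shiftedDiagram {S : Finset ℕ} {s : ℕ} (hs : s ∈ removableParts S) :
    (shiftedDiagram S).erase (cornerCell S s) = shiftedDiagram (decrPart s S) := by
  obtain ⟨d, rfl⟩ := Nat.exists_eq_add_one_of_ne_zero (ne_zero_of_mem_removableParts hs)
  have h_succ := numGT_eq_numGT_succ S d
  rw [if_pos (mem_removableParts.1 hs).1] at h_succ
  ext ⟨i, j⟩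
  have h_decr := numGT_eq_numGT_decrPart hs (j - i)
  simp only [mem_erase, mem_shiftedDiagram, cornerCell, Nat.add_sub_cancel, ne_eq, Prod.mk.injEq]
  by_cases hd : j - i = d
  · rw [if_pos (by omega)] at h_decr
    subst hd
    omega
  · rw [if_neg (by omega)] at h_decr
    omega

theorem sytCard_shiftedDiagram {S : Finset ℕ} (h0 : 0 ∉ S) :
    (sytCard (shiftedDiagram S) : ℚ) = schurCount S := by
  induction hN : ∑ i ∈ S, i generalizing S with
  | zero =>
    obtain rfl : S = ∅ := eq_empty_of_forall_notMem fun s hs ↦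
      h0 (sum_eq_zero_iff.1 hN s hs ▸ hs)
    rw [shiftedDiagram, sup_empty, bot_eq_zero, range_zero, biUnion_empty, sytCard_empty,
      schurCount_empty, Nat.cast_one]
  | succ N ih =>
    have hS : S.Nonempty := nonempty_of_sum_ne_zero (hN.trans_ne N.succ_ne_zero)
    have hD : (shiftedDiagram S).Nonempty := by
      obtain ⟨s, hs⟩ := hS
      exact ⟨(0, 0), mem_shiftedDiagram.2 ⟨le_rfl,
        numGT_pos.2 ⟨s, hs, Nat.pos_of_ne_zero (ne_of_mem_of_not_mem hs h0)⟩⟩⟩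
    rw [sytCard_eq_sum hD, terminalElements_shiftedDiagram h0,
      sum_image ((cornerCell_injOn h0).mono (removableParts_subset S)), schurCount_eq_sum h0 hS,
      Nat.cast_sum]
    refine sum_congr rfl fun s hs ↦ ?_
    rw [erase_cornerCell_shiftedDiagram hs]
    refine ih (zero_notMem_decrPart s S) ?_
    have := sum_decrPart_add_one hs
    omega

end ShiftedDiagram

section ComplementInStaircase

variable {n : ℕ} {V : Finset ℕ}

lemma zero_notMem_of_subset_Ico (hV : V ⊆ Ico 1 n) : 0 ∉ V := fun h ↦
  absurd (mem_Ico.1 (hV h)).1 (by norm_num)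

lemma decrPart_subset_Ico {s : ℕ} (hV : V ⊆ Ico 1 n) (hs : s ∈ V) :
    decrPart s V ⊆ Ico 1 n := by
  intro x hx
  have hs' := mem_Ico.1 (hV hs)
  obtain ⟨hx0, rfl | ⟨-, hxV⟩⟩ := mem_decrPart.1 hx
  · exact mem_Ico.2 ⟨by omega, by omega⟩
  · exact hV hxV

lemma mem_removableParts_sdiff_decrPart {s : ℕ} (hV : V ⊆ Ico 1 n) (hs : s ∈ removableParts V) :
    s ∈ removableParts (Ico 1 n \ decrPart s V) := by
  have hs0 := ne_zero_of_mem_removableParts hs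
  have hs' := mem_Ico.1 (hV (mem_removableParts.1 hs).1)
  simp only [mem_removableParts, mem_sdiff, mem_decrPart, mem_Ico]
  grind

lemma decrPart_sdiff_decrPart {s : ℕ} (hV : V ⊆ Ico 1 n) (hs : s ∈ removableParts V) :
    decrPart s (Ico 1 n \ decrPart s V) = Ico 1 n \ V := by
  have hs0 := ne_zero_of_mem_removableParts hs
  obtain ⟨hsV, hpred⟩ := mem_removableParts.1 hs
  have hs' := mem_Ico.1 (hV hsV)
  ext x
  simp only [mem_sdiff, mem_decrPart, mem_Ico]
  rcases eq_or_ne x s with rfl | hxs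
  · grind
  · rcases eq_or_ne x (s - 1) with rfl | hxs' <;> grind

variable {R : Type*} [CommRing R]

lemma sum_powerset_sum_removableParts_comm (f g : Finset ℕ → R) :
    ∑ V ∈ (Ico 1 n).powerset, ∑ s ∈ removableParts V, f (decrPart s V) * g (Ico 1 n \ V) =
      ∑ V ∈ (Ico 1 n).powerset, ∑ s ∈ removableParts V, f (Ico 1 n \ V) * g (decrPart s V) := by
  rw [sum_sigma', sum_sigma']
  let flip (p : (_ : Finset ℕ) × ℕ) : (_ : Finset ℕ) × ℕ := ⟨Ico 1 n \ decrPart p.2 p.1, p.2⟩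
  have flip_mem {p} (hp : p ∈ (Ico 1 n).powerset.sigma removableParts) :
      flip p ∈ (Ico 1 n).powerset.sigma removableParts := by
    rw [mem_sigma, mem_powerset] at hp ⊢
    exact ⟨sdiff_subset, mem_removableParts_sdiff_decrPart hp.1 hp.2⟩
  have flip_flip {p} (hp : p ∈ (Ico 1 n).powerset.sigma removableParts) : flip (flip p) = p := by
    rw [mem_sigma, mem_powerset] at hp
    simp only [flip, decrPart_sdiff_decrPart hp.1 hp.2, Finset.sdiff_sdiff_eq_self hp.1]
  refine sum_bij' (fun p _ ↦ flip p) (fun p _ ↦ flip p) (fun _ ↦ flip_mem) (fun _ ↦ flip_mem)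
    (fun _ ↦ flip_flip) (fun _ ↦ flip_flip) fun p hp ↦ ?_
  rw [mem_sigma, mem_powerset] at hp
  rw [decrPart_sdiff_decrPart hp.1 hp.2,
    Finset.sdiff_sdiff_eq_self (decrPart_subset_Ico hp.1 (mem_removableParts.1 hp.2).1)]

/-- The amount by which `f` fails to satisfy the recursion for the number of standard tableaux of a
shifted diagram, in which the cell of the largest entry is removed. -/
def removalDefect (f : Finset ℕ → R) (V : Finset ℕ) : R :=
  f V - ∑ s ∈ removableParts V, f (decrPart s V)

lemma removalDefect_schurCount (h0 : 0 ∉ V) :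
    removalDefect schurCount V = if V = ∅ then 1 else 0 := by
  rw [removalDefect]
  split_ifs with hV
  · rw [hV, removableParts, filter_empty, sum_empty, sub_zero, schurCount_empty]
  · rw [schurCount_eq_sum h0 (nonempty_iff_ne_empty.2 hV), sub_self]

theorem sum_removalDefect_mul_sdiff (n : ℕ) (f g : Finset ℕ → R) :
    ∑ V ∈ (Ico 1 n).powerset, removalDefect f V * g (Ico 1 n \ V) =
      ∑ V ∈ (Ico 1 n).powerset, f (Ico 1 n \ V) * removalDefect g V := by
  simp only [removalDefect, sub_mul, mul_sub, sum_sub_distrib, sum_mul, mul_sum]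
  rw [sum_powerset_sum_removableParts_comm]
  congr 1
  refine sum_nbij' (Ico 1 n \ ·) (Ico 1 n \ ·) ?_ ?_ ?_ ?_ ?_ <;> intro V hV <;>
    simp only [mem_powerset, sdiff_subset, Finset.sdiff_sdiff_eq_self (mem_powerset.1 hV)]

theorem sum_removalDefect_mul_schurCount_sdiff (n : ℕ) (f : Finset ℕ → ℚ) :
    ∑ V ∈ (Ico 1 n).powerset, removalDefect f V * schurCount (Ico 1 n \ V) = f (Ico 1 n) := by
  rw [sum_removalDefect_mul_sdiff, sum_eq_single_of_mem ∅ (empty_mem_powerset _),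
    removalDefect_schurCount (notMem_empty 0), if_pos rfl, sdiff_empty, mul_one]
  intro V hV hne
  have h0 := zero_notMem_of_subset_Ico (mem_powerset.1 hV)
  rw [removalDefect_schurCount h0, if_neg hne, mul_zero]

lemma removalDefect_ite_le_sum (h0 : 0 ∉ V) (t : ℕ) :
    removalDefect (fun W ↦ if t ≤ ∑ i ∈ W, i then schurCount W else 0) V =
      if ∑ i ∈ V, i = t then schurCount V else 0 := by
  have h_decr : ∀ s ∈ removableParts V,
      (if t ≤ ∑ i ∈ decrPart s V, i then schurCount (decrPart s V) else 0) =
        if t < ∑ i ∈ V, i then schurCount (decrPart s V) else 0 := fun s hs ↦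
    if_congr (by rw [← sum_decrPart_add_one hs, Nat.lt_succ_iff]) rfl rfl
  rw [removalDefect, sum_congr rfl h_decr]
  rcases lt_trichotomy t (∑ i ∈ V, i) with h | h | h
  · have hV : V.Nonempty := nonempty_of_sum_ne_zero (Nat.zero_lt_of_lt h).ne'
    simp only [h, h.le, h.ne', if_true, if_false, ← schurCount_eq_sum h0 hV, sub_self]
  · simp only [← h, le_refl, lt_irrefl, if_true, if_false, sum_const_zero, sub_zero]
  · simp only [h.not_ge, h.not_gt, h.ne, if_false, sum_const_zero, sub_zero]

lemma sum_schurCount_mul_schurCount_sdiff_of_sum_eq {t : ℕ} (ht : t ≤ ∑ i ∈ Ico 1 n, i) :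
    ∑ V ∈ (Ico 1 n).powerset with ∑ i ∈ V, i = t, schurCount V * schurCount (Ico 1 n \ V) =
      schurCount (Ico 1 n) := by
  have h := sum_removalDefect_mul_schurCount_sdiff n
    fun W ↦ if t ≤ ∑ i ∈ W, i then schurCount W else 0
  rw [if_pos ht] at h
  rw [← h, sum_filter]
  refine sum_congr rfl fun V hV ↦ ?_
  have h0 := zero_notMem_of_subset_Ico (mem_powerset.1 hV)
  rw [removalDefect_ite_le_sum h0, ite_mul, zero_mul]

theorem sum_mul_schurCount_mul_schurCount_sdiff (n : ℕ) (φ : ℕ → ℚ) :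
    ∑ V ∈ (Ico 1 n).powerset, φ (∑ i ∈ V, i) * (schurCount V * schurCount (Ico 1 n \ V)) =
      (∑ t ∈ range (∑ i ∈ Ico 1 n, i + 1), φ t) * schurCount (Ico 1 n) := by
  have h_maps : ∀ V ∈ (Ico 1 n).powerset, ∑ i ∈ V, i ∈ range (∑ i ∈ Ico 1 n, i + 1) :=
    fun V hV ↦ mem_range.2 (Nat.lt_succ_of_le (sum_le_sum_of_subset (mem_powerset.1 hV)))
  rw [← sum_fiberwise_of_maps_to h_maps, sum_mul]
  refine sum_congr rfl fun t ht ↦ ?_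
  rw [← sum_schurCount_mul_schurCount_sdiff_of_sum_eq (Nat.lt_succ_iff.1 (mem_range.1 ht)), mul_sum]
  exact sum_congr rfl fun V hV ↦ by rw [(mem_filter.1 hV).2]

end ComplementInStaircase

section TruncatedShape

lemma terminalElements_erase {α : Type*} [DecidableEq α] {r : α → α → Prop} {D : Finset α} {x : α}
    (h : ∀ c ∈ D, r c x → ∃ c' ∈ D, c' ≠ x ∧ r c c') :
    terminalElements r (D.erase x) = (terminalElements r D).erase x := by
  ext c
  simp only [mem_terminalElements, mem_erase]
  constructor
  · rintro ⟨⟨hcx, hcD⟩, hmax⟩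
    refine ⟨hcx, hcD, fun y hy hcy ↦ ?_⟩
    rcases eq_or_ne y x with rfl | hyx
    · obtain ⟨c', hc'D, hc'y, hcc'⟩ := h c hcD hcy
      exact hmax c' ⟨hc'y, hc'D⟩ hcc'
    · exact hmax y ⟨hyx, hy⟩ hcy
  · rintro ⟨hcx, hcD, hmax⟩
    exact ⟨⟨hcx, hcD⟩, fun y hy ↦ hmax y hy.2⟩

/-- The number of standard tableaux of the shifted diagram with row lengths `insert n V`, where `n`
is the length of the first row, from which the last cell of the first row has been removed. -/
def truncatedCount (n : ℕ) (V : Finset ℕ) : ℚ :=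
  sytCard ((shiftedDiagram (insert n V)).erase (0, n - 1))

variable {n m s : ℕ} {V : Finset ℕ}

lemma notMem_of_subset_Ico (hV : V ⊆ Ico 1 n) : n ∉ V := fun h ↦ (mem_Ico.1 (hV h)).2.false

lemma cornerCell_insert_self (hV : V ⊆ Ico 1 n) : cornerCell (insert n V) n = (0, n - 1) := by
  have h_zero : numGT (insert n V) n = 0 := numGT_eq_zero fun s hs ↦
    (mem_insert.1 hs).elim le_of_eq fun h ↦ (mem_Ico.1 (hV h)).2.le
  rw [cornerCell, h_zero, zero_add]

lemma mem_removableParts_insert (hV : V ⊆ Ico 1 n) :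
    s ∈ removableParts (insert n V) ∧ s ≠ n ↔ s ∈ removableParts V := by
  simp only [mem_removableParts, mem_insert]
  constructor
  · tauto
  · rintro ⟨hs, hpred⟩
    have := mem_Ico.1 (hV hs)
    exact ⟨⟨.inr hs, not_or.2 ⟨by omega, hpred⟩⟩, by omega⟩

lemma decrPart_insert_of_ne (hn : n ≠ 0) (hs : s ≠ n) :
    decrPart s (insert n V) = insert n (decrPart s V) := by
  rw [decrPart, decrPart, erase_insert_of_ne hs.symm, insert_comm, erase_insert_of_ne hn]

lemma truncatedCount_of_notMem (hV : V ⊆ Ico 1 (n + 1)) (hn : n ∉ V) :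
    truncatedCount (n + 1) V = schurCount (insert n V) := by
  have hs : n + 1 ∈ removableParts (insert (n + 1) V) :=
    mem_removableParts.2 ⟨mem_insert_self _ _, by simpa using hn⟩
  rw [truncatedCount, ← cornerCell_insert_self hV, erase_cornerCell_shiftedDiagram hs,
    sytCard_shiftedDiagram (zero_notMem_decrPart _ _), decrPart, schurCount_erase_zero,
    erase_insert (notMem_of_subset_Ico hV), Nat.add_sub_cancel]

/-- Whether the cell `(1, m + 1)` belongs to the shifted diagram with row lengths `m + 3` and
`V ⊆ Ico 1 (m + 3)`. This cell is below the left neighbour of the missing corner `(0, m + 2)`. -/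
def HasPivot (m : ℕ) (V : Finset ℕ) : Prop := m + 2 ∈ V ∨ m + 1 ∈ V

lemma terminalElements_erase_corner (hV : V ⊆ Ico 1 (m + 3)) (hpivot : HasPivot m V) :
    terminalElements CellLT ((shiftedDiagram (insert (m + 3) V)).erase (0, m + 2)) =
      (removableParts V).image (cornerCell (insert (m + 3) V)) := by
  set S := insert (m + 3) V with hS
  have h0 : 0 ∉ S := by
    simpa [hS] using zero_notMem_of_subset_Ico hV
  have h_left : (0, m + 1) ∈ shiftedDiagram S :=
    mem_shiftedDiagram.2 ⟨by omega, numGT_pos.2 ⟨m + 3, mem_insert_self _ _, by simp⟩⟩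
  have h_pivot : (1, m + 1) ∈ shiftedDiagram S := by
    refine mem_shiftedDiagram.2 ⟨by simp, one_lt_card.2 ?_⟩
    rcases hpivot with h | h
    · exact ⟨m + 3, by simp [hS], m + 2, by simp [hS, h], by simp⟩
    · exact ⟨m + 3, by simp [hS], m + 1, by simp [hS, h], by simp⟩
  have h_corner : cornerCell S (m + 3) = (0, m + 2) := cornerCell_insert_self hV
  rw [terminalElements_erase, terminalElements_shiftedDiagram h0]
  · ext c
    rw [mem_erase, mem_image, mem_image, ← h_corner]
    constructor
    · rintro ⟨hne, s, hs, rfl⟩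
      exact ⟨s, (mem_removableParts_insert hV).1 ⟨hs, fun h ↦ hne (congrArg _ h)⟩, rfl⟩
    · rintro ⟨s, hs, rfl⟩
      obtain ⟨hs, hne⟩ := (mem_removableParts_insert hV).2 hs
      exact ⟨(cornerCell_injOn h0).ne (removableParts_subset _ hs) (mem_insert_self _ _) hne,
        s, hs, rfl⟩
  · rintro ⟨i, j⟩ - (⟨hi, hj⟩ | ⟨-, hi⟩)
    · rcases (Nat.le_of_lt_succ hj).lt_or_eq with hj' | rfl
      · exact ⟨_, h_left, by simp, .inl ⟨hi, hj'⟩⟩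
      · exact ⟨_, h_pivot, by simp, .inr ⟨rfl, by simp_all⟩⟩
    · exact absurd hi (Nat.not_lt_zero i)

lemma truncatedCount_eq_sum (hV : V ⊆ Ico 1 (m + 3)) (hpivot : HasPivot m V) :
    truncatedCount (m + 3) V = ∑ s ∈ removableParts V, truncatedCount (m + 3) (decrPart s V) := by
  have h0 : 0 ∉ insert (m + 3) V := by simpa using zero_notMem_of_subset_Ico hV
  have h_nonempty : ((shiftedDiagram (insert (m + 3) V)).erase (0, m + 2)).Nonempty :=
    ⟨(0, 0), mem_erase.2 ⟨by simp, mem_shiftedDiagram.2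
      ⟨le_rfl, numGT_pos.2 ⟨m + 3, mem_insert_self _ _, by simp⟩⟩⟩⟩
  rw [truncatedCount, Nat.add_sub_assoc (by norm_num), sytCard_eq_sum h_nonempty,
    terminalElements_erase_corner hV hpivot, sum_image, Nat.cast_sum]
  · refine sum_congr rfl fun s hs ↦ ?_
    obtain ⟨hs, hne⟩ := (mem_removableParts_insert hV).2 hs
    rw [truncatedCount, erase_right_comm, erase_cornerCell_shiftedDiagram hs,
      decrPart_insert_of_ne (by omega) hne]
    rfl
  · exact (cornerCell_injOn h0).mono
      ((removableParts_subset V).trans (subset_insert _ _))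

/-- The number of standard tableaux counted by `truncatedCount (m + 3) V` if the pivot cell belongs
to the shape, and `0` otherwise. -/
def pivotCount (m : ℕ) (V : Finset ℕ) : ℚ :=
  if HasPivot m V then truncatedCount (m + 3) V else 0

lemma HasPivot.of_decrPart (hV : V ⊆ Ico 1 (m + 3)) (hs : s ∈ V)
    (h : HasPivot m (decrPart s V)) : HasPivot m V := by
  have := mem_Ico.1 (hV hs)
  simp only [HasPivot, mem_decrPart] at h ⊢
  grind

lemma HasPivot.not_decrPart_iff (hpivot : HasPivot m V) (hs : s ≠ 0) :
    ¬ HasPivot m (decrPart s V) ↔ s = m + 1 ∧ m + 2 ∉ V := by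
  simp only [HasPivot, mem_decrPart] at hpivot ⊢
  grind

lemma removalDefect_pivotCount_of_hasPivot (hV : V ⊆ Ico 1 (m + 3)) (hpivot : HasPivot m V) :
    removalDefect (pivotCount m) V = if m + 1 ∈ removableParts V ∧ m + 2 ∉ V then
      truncatedCount (m + 3) (decrPart (m + 1) V) else 0 := by
  have h_term : ∀ s ∈ removableParts V,
      truncatedCount (m + 3) (decrPart s V) - pivotCount m (decrPart s V) =
        if s = m + 1 then if m + 2 ∉ V then truncatedCount (m + 3) (decrPart (m + 1) V) else 0
        else 0 := by
    intro s hs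
    have h_iff := hpivot.not_decrPart_iff (ne_zero_of_mem_removableParts hs)
    rw [pivotCount, ← ite_and]
    split_ifs with h₁ h₂ h₂
    · exact absurd h₁ (h_iff.2 h₂)
    · rw [sub_self]
    · rw [h₂.1, sub_zero]
    · exact absurd (h_iff.1 h₁) h₂
  rw [removalDefect, pivotCount, if_pos hpivot, truncatedCount_eq_sum hV hpivot,
    ← sum_sub_distrib, sum_congr rfl h_term, sum_ite_eq', ite_and]

lemma truncatedCount_decrPart (hV : V ⊆ Ico 1 (m + 3)) (hs : m + 1 ∈ V) (hm : m + 2 ∉ V) :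
    truncatedCount (m + 3) (decrPart (m + 1) V) =
      schurCount (insert (m + 2) (insert m (V.erase (m + 1)))) := by
  have hm' : m + 2 ∉ decrPart (m + 1) V := by simp [mem_decrPart, hm]
  rw [truncatedCount_of_notMem (decrPart_subset_Ico hV hs) hm', decrPart,
    ← erase_insert_of_ne (by omega), schurCount_erase_zero, Nat.add_sub_cancel]

lemma removalDefect_pivotCount (hV : V ⊆ Ico 1 (m + 3)) :
    removalDefect (pivotCount m) V = if m + 1 ∈ removableParts V ∧ m + 2 ∉ V then
      schurCount (insert (m + 2) (insert m (V.erase (m + 1)))) else 0 := by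
  by_cases hpivot : HasPivot m V
  · rw [removalDefect_pivotCount_of_hasPivot hV hpivot]
    split_ifs with h
    · exact truncatedCount_decrPart hV (mem_removableParts.1 h.1).1 h.2
    · rfl
  · have h_decr : ∀ s ∈ removableParts V, pivotCount m (decrPart s V) = 0 := fun s hs ↦
      if_neg fun h ↦ hpivot (h.of_decrPart hV (removableParts_subset V hs))
    rw [removalDefect, pivotCount, if_neg hpivot, sum_eq_zero h_decr, sub_zero, if_neg]
    exact fun h ↦ hpivot (.inr (mem_removableParts.1 h.1).1)

lemma filter_powerset_Ico_eq_image (m : ℕ) :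
    {V ∈ (Ico 1 (m + 3)).powerset | m + 1 ∈ removableParts V ∧ m + 2 ∉ V} =
      (Ico 1 m).powerset.image (insert (m + 1)) := by
  ext V
  simp only [mem_filter, mem_powerset, mem_removableParts, mem_image, Nat.add_sub_cancel]
  constructor
  · rintro ⟨hV, ⟨h₁, h₀⟩, h₂⟩
    refine ⟨V.erase (m + 1), fun i hi ↦ ?_, insert_erase h₁⟩
    obtain ⟨hi₁, hiV⟩ := mem_erase.1 hi
    have hi₀ := ne_of_mem_of_not_mem hiV h₀
    have hi₂ := ne_of_mem_of_not_mem hiV h₂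
    have := mem_Ico.1 (hV hiV)
    exact mem_Ico.2 (by omega)
  · rintro ⟨W, hW, rfl⟩
    refine ⟨insert_subset (mem_Ico.2 (by omega)) (hW.trans (Ico_subset_Ico_right (by omega))),
      ⟨mem_insert_self _ _, ?_⟩, ?_⟩ <;>
    · rw [mem_insert, not_or]
      exact ⟨by omega, fun h ↦ by have := mem_Ico.1 (hW h); omega⟩

lemma Ico_sdiff_insert_eq_erase_zero {W : Finset ℕ} (hW : W ⊆ Ico 1 m) :
    Ico 1 (m + 3) \ insert (m + 1) W = (insert (m + 2) (insert m (Ico 1 m \ W))).erase 0 := by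
  ext i
  have : i ∈ W → 1 ≤ i ∧ i < m := fun hi ↦ mem_Ico.1 (hW hi)
  simp only [mem_sdiff, mem_insert, mem_erase, mem_Ico]
  grind

theorem truncatedCount_Ico (m : ℕ) :
    truncatedCount (m + 3) (Ico 1 (m + 3)) = ∑ W ∈ (Ico 1 m).powerset,
      schurCount (insert (m + 2) (insert m W)) *
        schurCount (insert (m + 2) (insert m (Ico 1 m \ W))) := by
  have hpivot : HasPivot m (Ico 1 (m + 3)) := .inl (mem_Ico.2 ⟨by omega, by omega⟩)
  have h_notMem {W} (hW : W ∈ (Ico 1 m).powerset) : m + 1 ∉ W := fun h ↦ by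
    have := mem_Ico.1 (mem_powerset.1 hW h)
    omega
  have h_insert : Set.InjOn (insert (m + 1)) ((Ico 1 m).powerset : Set (Finset ℕ)) :=
    fun W hW W' hW' h ↦ by
      rw [← erase_insert (h_notMem hW), h, erase_insert (h_notMem hW')]
  have h_sum := sum_removalDefect_mul_schurCount_sdiff (m + 3) (pivotCount m)
  rw [sum_congr rfl fun V hV ↦ by
    rw [removalDefect_pivotCount (mem_powerset.1 hV), ite_mul, zero_mul], ← sum_filter,
    filter_powerset_Ico_eq_image, sum_image h_insert, pivotCount, if_pos hpivot] at h_sum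
  rw [← h_sum]
  refine sum_congr rfl fun W hW ↦ ?_
  rw [erase_insert (h_notMem hW), Ico_sdiff_insert_eq_erase_zero (mem_powerset.1 hW),
    schurCount_erase_zero]

lemma shiftedDiagram_Ico (n : ℕ) :
    shiftedDiagram (Ico 1 (n + 1)) = {c ∈ range n ×ˢ range n | c.1 ≤ c.2} := by
  have h_numGT (d : ℕ) : numGT (Ico 1 (n + 1)) d = n - d := by
    rw [numGT, show {s ∈ Ico 1 (n + 1) | d < s} = Ioc d n by ext; simp; omega, Nat.card_Ioc]
  ext ⟨i, j⟩
  simp only [mem_shiftedDiagram, h_numGT, mem_filter, mem_product, mem_range]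
  omega

theorem sytCard_truncated_staircase (hn : n ≠ 0) :
    (sytCard ({c ∈ range n ×ˢ range n | c.1 ≤ c.2}.erase (0, n - 1)) : ℚ) =
      truncatedCount n (Ico 1 n) := by
  rw [truncatedCount, insert_Ico_right_eq_Ico_add_one (Nat.one_le_iff_ne_zero.2 hn),
    shiftedDiagram_Ico]

end TruncatedShape

section ClosedForm

open scoped Nat

lemma sum_range_choose_mul_choose (k M : ℕ) :
    ∑ t ∈ range (M + 1), (k + t).choose k * (k + (M - t)).choose k =
      (2 * k + 1 + M).choose (2 * k + 1) := by
  have h := congrArg (PowerSeries.coeff M)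
    (pow_add (PowerSeries.mk 1 : PowerSeries ℤ) (k + 1) (k + 1))
  rw [show k + 1 + (k + 1) = 2 * k + 1 + 1 by omega, PowerSeries.coeff_mul,
    PowerSeries.mk_one_pow_eq_mk_choose_add, PowerSeries.mk_one_pow_eq_mk_choose_add,
    Nat.sum_antidiagonal_eq_sum_range_succ_mk] at h
  simp only [PowerSeries.coeff_mk] at h
  exact_mod_cast h.symm

lemma schurCount_insert_insert {a b : ℕ} {V : Finset ℕ} (hab : a ≠ b) (ha : a ∉ V) (hb : b ∉ V) :
    schurCount (insert a (insert b V)) = (a + b).choose a * pairFactor a b *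
      (∏ j ∈ V, pairFactor a j * pairFactor b j) *
      ((a + b + ∑ i ∈ V, i).choose (a + b) * schurCount V) := by
  have h_choose : (a + (b + ∑ i ∈ V, i)).choose a * (b + ∑ i ∈ V, i).choose b =
      (a + b).choose a * (a + b + ∑ i ∈ V, i).choose (a + b) := by
    have h := Nat.choose_mul (n := a + b + ∑ i ∈ V, i) (Nat.le_add_right a b)
    rw [Nat.add_sub_cancel_left, add_assoc, Nat.add_sub_cancel_left] at h
    rw [add_assoc, mul_comm ((a + b).choose a), h]
  have h_choose' := congrArg (Nat.cast (R := ℚ)) h_choose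
  push_cast at h_choose'
  rw [schurCount_insert (by simp [hab, ha]), schurCount_insert hb, sum_insert hb, prod_insert hb,
    prod_mul_distrib]
  linear_combination (pairFactor a b * (∏ j ∈ V, pairFactor a j) * (∏ j ∈ V, pairFactor b j) *
    schurCount V) * h_choose'

theorem sum_schurCount_insert_insert_mul_sdiff {a b m : ℕ} (hab : a ≠ b) (ha : m ≤ a)
    (hb : m ≤ b) :
    ∑ W ∈ (Ico 1 m).powerset, schurCount (insert a (insert b W)) *
        schurCount (insert a (insert b (Ico 1 m \ W))) =
      ((a + b).choose a * pairFactor a b) ^ 2 * (∏ j ∈ Ico 1 m, pairFactor a j * pairFactor b j) *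
        ((2 * (a + b) + 1 + ∑ i ∈ Ico 1 m, i).choose (2 * (a + b) + 1) *
          schurCount (Ico 1 m)) := by
  set M := ∑ i ∈ Ico 1 m, i with hM
  have h_notMem {c} (hc : m ≤ c) {W} (hW : W ⊆ Ico 1 m) : c ∉ W := fun h ↦
    (mem_Ico.1 (hW h)).2.not_ge hc
  rw [← sum_range_choose_mul_choose, Nat.cast_sum,
    ← sum_mul_schurCount_mul_schurCount_sdiff m fun t ↦
      (((a + b + t).choose (a + b) * (a + b + (M - t)).choose (a + b) : ℕ) : ℚ), mul_sum]
  refine sum_congr rfl fun W hW ↦ ?_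
  rw [mem_powerset] at hW
  have h_sum : ∑ i ∈ Ico 1 m \ W, i = M - ∑ i ∈ W, i := by
    rw [hM, ← sum_sdiff hW, Nat.add_sub_cancel_right]
  rw [schurCount_insert_insert hab (h_notMem ha hW) (h_notMem hb hW),
    schurCount_insert_insert hab (h_notMem ha sdiff_subset) (h_notMem hb sdiff_subset), h_sum,
    ← prod_sdiff hW]
  push_cast
  ring

lemma prod_range_pairFactor {a b : ℕ} (h : b ≤ a) :
    ∏ j ∈ range b, pairFactor a j = a.descFactorial b / a.ascFactorial b := by
  rw [Nat.descFactorial_eq_prod_range, Nat.ascFactorial_eq_prod_range, Nat.cast_prod, Nat.cast_prod,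
    ← prod_div_distrib]
  refine prod_congr rfl fun j hj ↦ ?_
  have hja : j ≤ a := (mem_range.1 hj).le.trans h
  rw [pairFactor, Nat.cast_sub hja, abs_of_nonneg (sub_nonneg.2 (Nat.cast_le.2 hja)), Nat.cast_add]

lemma prod_Ico_one_pairFactor {a b : ℕ} (ha : a ≠ 0) (h : b ≤ a) :
    ∏ j ∈ Ico 1 b, pairFactor a j = a.descFactorial b / a.ascFactorial b := by
  rw [← prod_range_pairFactor h]
  refine prod_subset (fun j hj ↦ mem_range.2 (mem_Ico.1 hj).2) fun j hj hj' ↦ ?_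
  obtain rfl : j = 0 := by
    rw [mem_range] at hj
    rw [mem_Ico] at hj'
    omega
  rw [pairFactor_comm, pairFactor_zero_left ha]

lemma filter_lt_range_of_mem {i n : ℕ} (hi : i ∈ range n) : {j ∈ range n | j < i} = range i := by
  rw [range_eq_Ico, Ico_filter_lt, min_eq_right (mem_range.1 hi).le, range_eq_Ico]

lemma erase_zero_range (n : ℕ) : (range n).erase 0 = Ico 1 n := by
  ext i
  simp only [mem_erase, mem_range, mem_Ico, Nat.one_le_iff_ne_zero]

lemma ascFactorial_self_ne_zero (n : ℕ) : (n.ascFactorial n : ℚ) ≠ 0 := by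
  cases n with
  | zero => simp
  | succ n => exact_mod_cast (Nat.ascFactorial_pos n (n + 1)).ne'

lemma schurCount_Ico_one (n : ℕ) :
    schurCount (Ico 1 n) = (n.choose 2)! / ∏ j ∈ range n, (j.ascFactorial j : ℚ) := by
  have h_inner : ∀ i ∈ range n, ∏ j ∈ range n with j < i, pairFactor i j =
      i ! / i.ascFactorial i := fun i hi ↦ by
    rw [filter_lt_range_of_mem hi, ← Nat.descFactorial_self, ← prod_range_pairFactor le_rfl]
  rw [← erase_zero_range, schurCount_erase_zero, schurCount,
    sum_range_id, ← Nat.choose_two_right, prod_congr rfl h_inner, prod_div_distrib]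
  have : ∏ i ∈ range n, (i ! : ℚ) ≠ 0 := prod_ne_zero_iff.2 fun i _ ↦ by positivity
  field_simp

lemma prod_filter_lt_add (n : ℕ) :
    ∏ x ∈ range n ×ˢ range n with x.1 < x.2, ((x.1 + x.2 : ℕ) : ℚ) =
      ∏ j ∈ range n, (j.ascFactorial j : ℚ) := by
  rw [prod_filter, prod_product_right]
  refine prod_congr rfl fun j hj ↦ ?_
  rw [← prod_filter, filter_lt_range_of_mem hj, Nat.ascFactorial_eq_prod_range, Nat.cast_prod]
  exact prod_congr rfl fun i _ ↦ by rw [add_comm]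

lemma cast_catalan_eq (c : ℕ) : (catalan c : ℚ) = (2 * c)! / (c ! * (c + 1)!) := by
  have h : (c + 1 : ℚ) * catalan c = (2 * c)! / (c ! * c !) := by
    rw [two_mul, ← Nat.cast_add_choose, ← two_mul]
    exact_mod_cast succ_mul_catalan_eq_centralBinom c
  rw [Nat.factorial_succ]
  push_cast
  field_simp at h ⊢
  linear_combination h

lemma cast_ascFactorial_succ (c k : ℕ) : ((c + 1).ascFactorial k : ℚ) = (c + k)! / c ! := by
  rw [eq_div_iff (by positivity), mul_comm]
  exact_mod_cast Nat.factorial_mul_ascFactorial c k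

lemma schurCount_Ico_add_four (m : ℕ) :
    schurCount (Ico 1 (m + 4)) = schurCount (Ico 1 m) *
      ((m.choose 2 + (4 * m + 6))! / (m.choose 2)!) *
      (m ! * (m + 1)! * (m + 2)! /
        (m.ascFactorial m * (2 * m + 1)! * (2 * m + 3)! * (2 * m + 5)!)) := by
  have h_choose : (m + 4).choose 2 = m.choose 2 + (4 * m + 6) := by
    simp only [Nat.choose_succ_succ' _ 1, Nat.choose_one_right]
    ring
  have h_prod : ∏ j ∈ range m, (j.ascFactorial j : ℚ) ≠ 0 :=
    prod_ne_zero_iff.2 fun j _ ↦ ascFactorial_self_ne_zero j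
  have h_asc : (m.ascFactorial m : ℚ) ≠ 0 := ascFactorial_self_ne_zero m
  rw [schurCount_Ico_one, schurCount_Ico_one, h_choose]
  simp only [prod_range_succ, cast_ascFactorial_succ]
  rw [show m + (m + 1) = 2 * m + 1 by omega, show m + 1 + (m + 2) = 2 * m + 3 by omega,
    show m + 2 + (m + 3) = 2 * m + 5 by omega]
  field_simp

lemma prod_Ico_one_pairFactor_mul_pairFactor (m : ℕ) :
    ∏ j ∈ Ico 1 m, pairFactor (m + 2) j * pairFactor m j =
      (m + 2)! * (m + 1)! * m ! / (2 * (2 * m + 1)! * m.ascFactorial m) := by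
  have h_desc : ((m + 2).descFactorial m : ℚ) = (m + 2)! / 2 := by
    have h := Nat.factorial_mul_descFactorial (Nat.le_add_right m 2)
    rw [Nat.add_sub_cancel_left, Nat.factorial_two] at h
    rw [eq_div_iff two_ne_zero, mul_comm]
    exact_mod_cast h
  rcases eq_or_ne m 0 with rfl | hm
  · simp
  · rw [prod_mul_distrib, prod_Ico_one_pairFactor (by omega) (by omega),
      prod_Ico_one_pairFactor hm le_rfl, cast_ascFactorial_succ, h_desc, Nat.descFactorial_self,
      show m + 1 + m = 2 * m + 1 by omega]
    field_simp

lemma truncatedCount_Ico_eq_schurCount_mul (m : ℕ) :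
    truncatedCount (m + 3) (Ico 1 (m + 3)) = schurCount (Ico 1 m) *
      ((m.choose 2 + (4 * m + 5))! / (m.choose 2)!) *
      ((2 * m + 2)! ^ 2 * m ! /
        (2 * (m + 1)! * (m + 2)! * m.ascFactorial m * (2 * m + 1)! * (4 * m + 5)!)) := by
  have h_sum : ∑ i ∈ Ico 1 m, i = m.choose 2 := by
    rw [← erase_zero_range, sum_erase (f := fun i ↦ i) _ rfl, sum_range_id, Nat.choose_two_right]
  have h_pair : pairFactor (m + 2) m = 1 / (m + 1) := by
    rw [pairFactor]
    push_cast
    rw [add_sub_cancel_left, abs_of_pos two_pos]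
    field_simp
    ring
  have h_asc : (m.ascFactorial m : ℚ) ≠ 0 := ascFactorial_self_ne_zero m
  rw [truncatedCount_Ico, sum_schurCount_insert_insert_mul_sdiff (by omega) (by omega) le_rfl,
    prod_Ico_one_pairFactor_mul_pairFactor, h_pair, h_sum, Nat.cast_add_choose,
    Nat.cast_add_choose, show m + 2 + m = 2 * m + 2 by omega,
    show 2 * (2 * m + 2) + 1 = 4 * m + 5 by omega, add_comm (4 * m + 5), Nat.factorial_succ m]
  push_cast
  field_simp

lemma catalan_mul_catalan_div_two_mul_catalan (m : ℕ) :
    (catalan (m + 3) * catalan (m + 1) / (2 * catalan (2 * m + 3)) : ℚ) =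
      (2 * m + 5)! * (2 * m + 3)! * (2 * m + 2)! ^ 2 /
        ((m + 1)! ^ 2 * (m + 2)! * (m + 4)! * (4 * m + 5)!) := by
  have h₄ : ((2 * m + 4)! : ℚ) = 2 * (m + 2) * (2 * m + 3)! := by
    rw [Nat.factorial_succ]
    push_cast
    ring
  have h₆ : ((2 * m + 6)! : ℚ) = 2 * (m + 3) * (2 * m + 5)! := by
    rw [Nat.factorial_succ]
    push_cast
    ring
  have h₆' : ((4 * m + 6)! : ℚ) = 2 * (2 * (m + 1) + 1) * (4 * m + 5)! := by
    rw [Nat.factorial_succ]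
    push_cast
    ring
  have h₃ : ((2 * m + 3)! : ℚ) = (2 * (m + 1) + 1) * (2 * m + 2)! := by
    rw [Nat.factorial_succ]
    push_cast
    ring
  have h₂ : ((m + 3)! : ℚ) = (m + 3) * (m + 2) * (m + 1)! := by
    rw [Nat.factorial_succ, Nat.factorial_succ]
    push_cast
    ring
  rw [cast_catalan_eq, cast_catalan_eq, cast_catalan_eq, show 2 * (m + 3) = 2 * m + 6 by omega,
    show 2 * (m + 1) = 2 * m + 2 by omega, show 2 * (2 * m + 3) = 4 * m + 6 by omega,
    h₆, h₆', h₄, h₂, h₃]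
  field_simp

theorem truncatedCount_Ico_eq (m : ℕ) :
    truncatedCount (m + 3) (Ico 1 (m + 3)) = schurCount (Ico 1 (m + 4)) *
      catalan (m + 3) * catalan (m + 1) / (2 * catalan (2 * m + 3)) := by
  have h_asc : (m.ascFactorial m : ℚ) ≠ 0 := ascFactorial_self_ne_zero m
  have h_size : ((m.choose 2 + (4 * m + 6))! : ℚ) =
      (m + 4) * (m + 3) / 2 * (m.choose 2 + (4 * m + 5))! := by
    rw [show m.choose 2 + (4 * m + 6) = m.choose 2 + (4 * m + 5) + 1 by omega,
      Nat.factorial_succ]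
    push_cast [Nat.cast_choose_two]
    ring
  have h_fact : ((m + 4)! : ℚ) = (m + 4) * (m + 3) * (m + 2)! := by
    rw [Nat.factorial_succ, Nat.factorial_succ]
    push_cast
    ring
  rw [mul_assoc, mul_div_assoc, catalan_mul_catalan_div_two_mul_catalan,
    truncatedCount_Ico_eq_schurCount_mul, schurCount_Ico_add_four, h_size, h_fact]
  field_simp

end ClosedForm

/-- the number of standard shifted tableaux of the staircase
`δ_n = (n, n-1, ..., 1)` with its upper-right corner box removed equals
`g_n * C_n * C_{n-2} / (2 * C_{2n-3})`. -/
theorem stmt0 (n : ℕ) (hn : 3 ≤ n) :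
    (sytCard ((((Finset.range n) ×ˢ (Finset.range n)).filter
        fun c => c.1 ≤ c.2).erase (0, n - 1)) : ℚ) =
      ((Nat.factorial ((n + 1).choose 2) : ℚ) /
          ∏ x ∈ ((Finset.range (n + 1)) ×ˢ (Finset.range (n + 1))).filter
            (fun x => x.1 < x.2), ((x.1 + x.2 : ℕ) : ℚ)) *
        (catalan n) * (catalan (n - 2)) / (2 * catalan (2 * n - 3)) := by
  obtain ⟨m, rfl⟩ := Nat.exists_eq_add_of_le' hn
  rw [sytCard_truncated_staircase (by omega), truncatedCount_Ico_eq, prod_filter_lt_add,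
    ← schurCount_Ico_one, show m + 3 - 2 = m + 1 by omega,
    show 2 * (m + 3) - 3 = 2 * m + 3 by omega]
end
end

section
/- Let f_q(v) = v^{binom(k,2)} * prod over 1 <= i <= k < j <= m of (v q^{m-i} - q^{m-j}), written as sum_i a_i(q) v^i. Then sum over p >= 0 of s_{(p^k)}(1, q, ..., q^{m-1}) t^p = (prod over m-k <= i < m, 0 <= j < m-k of 1/(q^i - q^j)) * sum_i a_i(q)/(1 - q^i t), as an identity of formal power series in t. -/
open Finset
open scoped Classical

noncomputable section

/-!
Removing the largest letter from a semistandard tableau removes a horizontal strip, so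
`s_lam(x_1, …, x_n)` expands over the partitions interlacing `lam`. The alternant
`det (x_j ^ (lam_i + n - i))` satisfies the same recursion up to the factor `∏ (x_j - x_n)`, which
gives the bialternant formula. At `x_j = q ^ (j - 1)` the alternants become Vandermonde determinants
in the nodes `q ^ (lam_i + n - i)`, and for `lam = (p^k)` everything except `f_q(q ^ p)` is
independent of `p`. Hence `s_{(p^k)}(1, q, …, q ^ (m - 1)) * f_q(1) = f_q(q ^ p)`, and summing
against `t ^ p` turns each coefficient `a_i` of `f_q` into the geometric series
`a_i / (1 - q ^ i t)`.
-/

/-! ### Removing the largest letter -/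

section Filling

variable {D E : Finset (ℕ × ℕ)} {n : ℕ}

/-- The cells of `D` that the filling `T` does not fill with the largest letter. For semistandard
`T` they form the diagram of a partition, over which `T` is a tableau with one letter fewer. -/
def belowLast (T : D → Fin (n + 1)) : Finset (ℕ × ℕ) :=
  (univ.filter (T · ≠ Fin.last n)).map (Function.Embedding.subtype _)

lemma mem_belowLast {T : D → Fin (n + 1)} {c : ℕ × ℕ} :
    c ∈ belowLast T ↔ ∃ h : c ∈ D, T ⟨c, h⟩ ≠ Fin.last n := by
  simp [belowLast]

/-- The filling of `D` which agrees with `U` on `E` and uses the new largest letter elsewhere;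
it is meant for `E ⊆ D`. -/
def extendLast (U : E → Fin n) : D → Fin (n + 1) := fun c =>
  if h : (c : ℕ × ℕ) ∈ E then (U ⟨c, h⟩).castSucc else Fin.last n

lemma extendLast_of_mem (U : E → Fin n) {c : D} (h : (c : ℕ × ℕ) ∈ E) :
    extendLast U c = (U ⟨c, h⟩).castSucc :=
  dif_pos h

lemma extendLast_of_notMem (U : E → Fin n) {c : D} (h : (c : ℕ × ℕ) ∉ E) :
    extendLast U c = Fin.last n :=
  dif_neg h

lemma extendLast_subtype (hED : E ⊆ D) (U : E → Fin n) (c : E) :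
    extendLast U (⟨c, hED c.2⟩ : D) = (U c).castSucc :=
  extendLast_of_mem U c.2

lemma extendLast_injective (hED : E ⊆ D) :
    Function.Injective (extendLast : (E → Fin n) → D → Fin (n + 1)) := by
  refine fun U V hUV => funext fun c => ?_
  have hc := congrFun hUV ⟨c, hED c.2⟩
  rw [extendLast_subtype hED, extendLast_subtype hED] at hc
  exact Fin.castSucc_injective n hc

lemma belowLast_extendLast (hED : E ⊆ D) (U : E → Fin n) :
    belowLast (extendLast U : D → Fin (n + 1)) = E := by
  ext c
  rw [mem_belowLast]
  constructor
  · rintro ⟨_, hne⟩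
    by_contra hcE
    exact hne (extendLast_of_notMem U hcE)
  · intro hcE
    refine ⟨hED hcE, ?_⟩
    rw [extendLast_of_mem U hcE]
    exact Fin.castSucc_ne_last _

lemma exists_extendLast_eq (T : D → Fin (n + 1)) :
    ∃ U : belowLast T → Fin n, extendLast U = T := by
  refine ⟨fun c => (T ⟨c, (mem_belowLast.1 c.2).1⟩).castPred (mem_belowLast.1 c.2).2, ?_⟩
  funext c
  by_cases hc : (c : ℕ × ℕ) ∈ belowLast T
  · rw [extendLast_of_mem _ hc, Fin.castSucc_castPred]
  · rw [extendLast_of_notMem _ hc]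
    by_contra hne
    exact hc (mem_belowLast.2 ⟨c.2, Ne.symm hne⟩)

lemma prod_extendLast {R : Type*} [CommMonoid R] (hED : E ⊆ D) (x : Fin (n + 1) → R)
    (U : E → Fin n) :
    ∏ c : D, x (extendLast U c) = x (Fin.last n) ^ #(D \ E) * ∏ c, x (U c).castSucc := by
  let w : ℕ × ℕ → R := fun c =>
    if h : c ∈ E then x (U ⟨c, h⟩).castSucc else x (Fin.last n)
  have hw (c : D) : x (extendLast U c) = w c := by
    simp only [w, extendLast]
    split_ifs <;> rfl
  have hout : ∏ c ∈ D \ E, w c = x (Fin.last n) ^ #(D \ E) :=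
    prod_eq_pow_card fun c hc => dif_neg (mem_sdiff.1 hc).2
  have hin : ∏ c ∈ E, w c = ∏ c, x (U c).castSucc := by
    rw [← prod_coe_sort E]
    exact prod_congr rfl fun c _ => dif_pos c.2
  rw [prod_congr rfl fun c _ => hw c, prod_coe_sort D w, ← prod_sdiff hED, hout, hin]

end Filling

section SkewCells

variable {lam mu : ℕ →₀ ℕ}

lemma mem_skewCells {c : ℕ × ℕ} : c ∈ skewCells lam mu ↔ mu c.1 ≤ c.2 ∧ c.2 < lam c.1 := by
  obtain ⟨i, j⟩ := c
  simp only [skewCells, mem_biUnion, Finsupp.mem_support_iff, mem_image, mem_filter, mem_range,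
    Prod.mk.injEq]
  constructor
  · rintro ⟨_, -, _, ⟨hlt, hle⟩, rfl, rfl⟩
    exact ⟨hle, hlt⟩
  · rintro ⟨hle, hlt⟩
    exact ⟨i, by omega, j, ⟨hlt, hle⟩, rfl, rfl⟩

lemma mem_skewCells_zero {c : ℕ × ℕ} : c ∈ skewCells lam 0 ↔ c.2 < lam c.1 := by
  simp [mem_skewCells]

lemma skewCells_sdiff : skewCells lam 0 \ skewCells mu 0 = skewCells lam mu := by
  ext c
  rw [mem_sdiff, mem_skewCells_zero, mem_skewCells_zero, mem_skewCells, not_lt, and_comm]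

lemma skewCells_zero_injective : Function.Injective fun lam => skewCells lam 0 := by
  intro lam mu h
  ext i
  refine eq_of_forall_lt_iff fun j => ?_
  simpa only [mem_skewCells_zero] using Finset.ext_iff.1 h (i, j)

lemma card_skewCells : #(skewCells lam mu) = lam.sum fun i a => a - mu i := by
  have hrow (i : ℕ) : #(((range (lam i)).filter (mu i ≤ ·)).image (Prod.mk i)) =
      lam i - mu i := by
    have hIco : (range (lam i)).filter (mu i ≤ ·) = Ico (mu i) (lam i) := by
      ext j
      rw [mem_filter, mem_range, mem_Ico, and_comm]
    rw [card_image_of_injective _ (Prod.mk_right_injective i), hIco, Nat.card_Ico]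
  rw [skewCells, card_biUnion, Finsupp.sum]
  · exact sum_congr rfl fun i _ => hrow i
  · refine fun i _ i' _ hii' => disjoint_left.2 fun c hc hc' => hii' ?_
    obtain ⟨_, -, rfl⟩ := mem_image.1 hc
    obtain ⟨_, -, hc'⟩ := mem_image.1 hc'
    exact (congrArg Prod.fst hc').symm

end SkewCells

section Branching

variable {lam mu : ℕ →₀ ℕ} {n : ℕ}

/-- The rows of `mu` and `lam` interlace, i.e. `lam / mu` is a horizontal strip. -/
def Interlaces (mu lam : ℕ →₀ ℕ) : Prop := ∀ i, lam (i + 1) ≤ mu i ∧ mu i ≤ lam i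

lemma Interlaces.antitone (h : Interlaces mu lam) : Antitone lam :=
  antitone_nat_of_succ_le fun i => (h i).1.trans (h i).2

lemma Interlaces.skewCells_subset (h : Interlaces mu lam) : skewCells mu 0 ⊆ skewCells lam 0 :=
  fun c hc => mem_skewCells_zero.2 ((mem_skewCells_zero.1 hc).trans_le (h c.1).2)

lemma Interlaces.isSSYT_extendLast_iff (h : Interlaces mu lam) (U : skewCells mu 0 → Fin n) :
    IsSSYT lam 0 (n + 1) (extendLast U) ↔ IsSSYT mu 0 n U := by
  constructor
  · intro hT c c'
    have hcc' := hT ⟨c, h.skewCells_subset c.2⟩ ⟨c', h.skewCells_subset c'.2⟩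
    simpa only [extendLast_subtype h.skewCells_subset, Fin.castSucc_le_castSucc_iff,
      Fin.castSucc_lt_castSucc_iff] using hcc'
  · intro hU c c'
    constructor
    · intro hrow hle
      by_cases hc' : (c' : ℕ × ℕ) ∈ skewCells mu 0
      · have hc : (c : ℕ × ℕ) ∈ skewCells mu 0 := by
          rw [mem_skewCells_zero] at hc' ⊢
          rw [hrow]
          exact hle.trans_lt hc'
        rw [extendLast_of_mem U hc, extendLast_of_mem U hc', Fin.castSucc_le_castSucc_iff]
        exact (hU ⟨c, hc⟩ ⟨c', hc'⟩).1 hrow hle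
      · rw [extendLast_of_notMem U hc']
        exact Fin.le_last _
    · intro hcol hlt
      have hc : (c : ℕ × ℕ) ∈ skewCells mu 0 := by
        rw [mem_skewCells_zero, hcol]
        exact (mem_skewCells_zero.1 c'.2).trans_le ((h.antitone hlt).trans (h _).1)
      rw [extendLast_of_mem U hc]
      by_cases hc' : (c' : ℕ × ℕ) ∈ skewCells mu 0
      · rw [extendLast_of_mem U hc', Fin.castSucc_lt_castSucc_iff]
        exact (hU ⟨c, hc⟩ ⟨c', hc'⟩).2 hcol hlt
      · rw [extendLast_of_notMem U hc']
        exact Fin.castSucc_lt_last _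

lemma Interlaces.sum_isSSYT_belowLast_eq {R : Type*} [CommSemiring R] (h : Interlaces mu lam)
    (x : Fin (n + 1) → R) :
    ∑ T with IsSSYT lam 0 (n + 1) T ∧ belowLast T = skewCells mu 0, ∏ c, x (T c) =
      x (Fin.last n) ^ #(skewCells lam mu) * skewSchur n mu 0 fun i => x i.castSucc := by
  have hsub := h.skewCells_subset
  rw [skewSchur, mul_sum]
  symm
  refine sum_bij (fun U _ => extendLast U) ?_ ?_ ?_ ?_
  · intro U hU
    rw [mem_filter_univ] at hU ⊢
    exact ⟨(h.isSSYT_extendLast_iff U).2 hU, belowLast_extendLast hsub U⟩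
  · exact fun U _ V _ hUV => extendLast_injective hsub hUV
  · intro T hT
    obtain ⟨hT, hbelow⟩ := (mem_filter_univ T).1 hT
    obtain ⟨U, rfl⟩ : ∃ U : skewCells mu 0 → Fin n, extendLast U = T :=
      hbelow ▸ exists_extendLast_eq T
    exact ⟨U, (mem_filter_univ U).2 ((h.isSSYT_extendLast_iff U).1 hT), rfl⟩
  · intro U _
    rw [prod_extendLast hsub, skewCells_sdiff]

end Branching

section SSYT

variable {lam : ℕ →₀ ℕ} {n : ℕ}

lemma IsSSYT.monotone {T : skewCells lam 0 → Fin n} (hlam : IsPartition lam)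
    (hT : IsSSYT lam 0 n T) : Monotone T := by
  rintro ⟨⟨i, j⟩, hc⟩ ⟨⟨i', j'⟩, hc'⟩ ⟨hi : i ≤ i', hj : j ≤ j'⟩
  have hcorner : (i, j') ∈ skewCells lam 0 :=
    mem_skewCells_zero.2 ((mem_skewCells_zero.1 hc').trans_le (hlam _ _ hi))
  have hrow : T ⟨(i, j), hc⟩ ≤ T ⟨(i, j'), hcorner⟩ := (hT _ _).1 rfl hj
  obtain rfl | hlt := hi.eq_or_lt
  · exact hrow
  · exact hrow.trans ((hT ⟨(i, j'), hcorner⟩ ⟨(i', j'), hc'⟩).2 rfl hlt).le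

lemma IsSSYT.row_le {T : skewCells lam 0 → Fin n} (hlam : IsPartition lam)
    (hT : IsSSYT lam 0 n T) (c : skewCells lam 0) : (c : ℕ × ℕ).1 ≤ T c := by
  obtain ⟨⟨i, j⟩, hc⟩ := c
  induction i with
  | zero => exact Nat.zero_le _
  | succ i ih =>
    have hup : (i, j) ∈ skewCells lam 0 :=
      mem_skewCells_zero.2 ((mem_skewCells_zero.1 hc).trans_le (hlam _ _ i.le_succ))
    exact (ih hup).trans_lt ((hT ⟨_, hup⟩ ⟨_, hc⟩).2 rfl i.lt_succ_self)

variable {T : skewCells lam 0 → Fin (n + 1)}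

lemma IsSSYT.isLowerSet_belowLast (hlam : IsPartition lam) (hT : IsSSYT lam 0 (n + 1) T) :
    IsLowerSet (belowLast T : Set (ℕ × ℕ)) := by
  intro c c' hle hc
  obtain ⟨hcell, hne⟩ := mem_belowLast.1 hc
  have hcell' : c' ∈ skewCells lam 0 := mem_skewCells_zero.2
    ((hle.2.trans_lt (mem_skewCells_zero.1 hcell)).trans_le (hlam _ _ hle.1))
  have hT_le : T ⟨c', hcell'⟩ ≤ T ⟨c, hcell⟩ := hT.monotone hlam hle
  exact mem_belowLast.2 ⟨hcell', (hT_le.trans_lt (Fin.lt_last_iff_ne_last.2 hne)).ne⟩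

lemma IsSSYT.mem_belowLast_of_succ (hlam : IsPartition lam) (hT : IsSSYT lam 0 (n + 1) T)
    {i j : ℕ} (hdown : (i + 1, j) ∈ skewCells lam 0) : (i, j) ∈ belowLast T := by
  have hup : (i, j) ∈ skewCells lam 0 :=
    mem_skewCells_zero.2 ((mem_skewCells_zero.1 hdown).trans_le (hlam _ _ i.le_succ))
  exact mem_belowLast.2
    ⟨hup, (((hT ⟨_, hup⟩ ⟨_, hdown⟩).2 rfl i.lt_succ_self).trans_le (Fin.le_last _)).ne⟩

lemma IsSSYT.exists_interlaces (hlam : IsPartition lam) (hT : IsSSYT lam 0 (n + 1) T) :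
    ∃ mu, Interlaces mu lam ∧ (∀ i, n ≤ i → mu i = 0) ∧ skewCells mu 0 = belowLast T := by
  let Y : YoungDiagram := ⟨belowLast T, hT.isLowerSet_belowLast hlam⟩
  have hY {i j : ℕ} : (i, j) ∈ belowLast T ↔ j < Y.rowLen i := Y.mem_iff_lt_rowLen
  have hle (i : ℕ) : Y.rowLen i ≤ lam i := le_of_forall_lt fun j hj =>
    mem_skewCells_zero.1 (mem_belowLast.1 (hY.2 hj)).1
  let mu : ℕ →₀ ℕ := Finsupp.onFinset lam.support Y.rowLen fun i hi =>
    Finsupp.mem_support_iff.2 fun h0 => hi (Nat.le_zero.1 (h0 ▸ hle i))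
  refine ⟨mu, fun i => ⟨?_, hle i⟩, fun i hi => ?_, ?_⟩
  · exact le_of_forall_lt fun j hj =>
      hY.1 (hT.mem_belowLast_of_succ hlam (mem_skewCells_zero.2 hj))
  · by_contra hpos
    obtain ⟨hcell, hne⟩ := mem_belowLast.1 (hY.2 (Nat.pos_of_ne_zero hpos))
    exact hne (Fin.last_le_iff.1 (hi.trans (hT.row_le hlam ⟨_, hcell⟩)))
  · ext c
    rw [mem_skewCells_zero]
    exact hY.symm

end SSYT

section Rows

variable {n : ℕ}

/-- The finitely supported function with rows `lam 0, …, lam (n - 1)`, followed by zeros. -/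
def ofRows (lam : Fin n → ℕ) : ℕ →₀ ℕ :=
  (Finsupp.equivFunOnFinite.symm lam).embDomain Fin.valEmbedding

lemma ofRows_val (lam : Fin n → ℕ) (i : Fin n) : ofRows lam i = lam i :=
  Finsupp.embDomain_apply_self _ _ i

lemma ofRows_of_le (lam : Fin n → ℕ) {i : ℕ} (hi : n ≤ i) : ofRows lam i = 0 :=
  Finsupp.embDomain_of_notMem_range _ _ _ <| by
    rintro ⟨j, rfl⟩
    exact j.2.not_ge hi

lemma ofRows_injective : Function.Injective (ofRows : (Fin n → ℕ) → ℕ →₀ ℕ) :=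
  (Finsupp.embDomain_injective _).comp Finsupp.equivFunOnFinite.symm.injective

lemma ofRows_eq {mu : ℕ →₀ ℕ} (hmu : ∀ i, n ≤ i → mu i = 0) :
    ofRows (fun i : Fin n => mu i) = mu := by
  ext i
  obtain hi | hi := lt_or_ge i n
  · exact ofRows_val (fun i : Fin n => mu i) ⟨i, hi⟩
  · rw [ofRows_of_le _ hi, hmu i hi]

lemma isPartition_ofRows {lam : Fin n → ℕ} (hlam : Antitone lam) : IsPartition (ofRows lam) := by
  intro i j hij
  obtain hj | hj := lt_or_ge j n
  · have hle : lam ⟨j, hj⟩ ≤ lam ⟨i, hij.trans_lt hj⟩ := hlam hij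
    rwa [← ofRows_val lam ⟨j, hj⟩, ← ofRows_val lam ⟨i, _⟩] at hle
  · rw [ofRows_of_le lam hj]
    exact Nat.zero_le _

/-- The sequences interlacing `lam`, i.e. the possible next rows in a Gelfand–Tsetlin pattern. -/
def interlacing (lam : Fin (n + 1) → ℕ) : Finset (Fin n → ℕ) :=
  Fintype.piFinset fun i => Icc (lam i.succ) (lam i.castSucc)

lemma mem_interlacing {lam : Fin (n + 1) → ℕ} {mu : Fin n → ℕ} :
    mu ∈ interlacing lam ↔ ∀ i, lam i.succ ≤ mu i ∧ mu i ≤ lam i.castSucc := by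
  simp only [interlacing, Fintype.mem_piFinset, mem_Icc]

lemma mem_interlacing_iff_interlaces {lam : Fin (n + 1) → ℕ} {mu : Fin n → ℕ} :
    mu ∈ interlacing lam ↔ Interlaces (ofRows mu) (ofRows lam) := by
  have hval (i : Fin n) : (lam i.succ ≤ mu i ∧ mu i ≤ lam i.castSucc) ↔
      (ofRows lam (i + 1) ≤ ofRows mu i ∧ ofRows mu i ≤ ofRows lam i) := by
    rw [← ofRows_val lam, ← ofRows_val lam, ← ofRows_val mu, Fin.val_succ, Fin.val_castSucc]
  simp only [mem_interlacing, hval]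
  refine ⟨fun h i => ?_, fun h i => h i⟩
  obtain hi | hi := lt_or_ge i n
  · exact h ⟨i, hi⟩
  · rw [ofRows_of_le lam (Nat.succ_le_succ hi), ofRows_of_le mu hi]
    exact ⟨le_rfl, Nat.zero_le _⟩

lemma antitone_of_mem_interlacing {lam : Fin (n + 1) → ℕ} {mu : Fin n → ℕ} (hlam : Antitone lam)
    (hmu : mu ∈ interlacing lam) : Antitone mu := by
  rw [mem_interlacing] at hmu
  intro i j hij
  obtain rfl | hlt := hij.eq_or_lt
  · rfl
  · exact (hmu j).2.trans ((hlam (Fin.succ_le_castSucc_iff.2 hlt)).trans (hmu i).1)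

lemma interlacing_zero : interlacing (0 : Fin (n + 1) → ℕ) = {0} := by
  ext mu
  simp [mem_interlacing, funext_iff]

lemma card_skewCells_ofRows (lam : Fin (n + 1) → ℕ) (mu : Fin n → ℕ) :
    #(skewCells (ofRows lam) (ofRows mu)) =
      lam (Fin.last n) + ∑ i : Fin n, (lam i.castSucc - mu i) := by
  have hlast : ofRows mu (Fin.last n) = 0 := ofRows_of_le mu le_rfl
  have hval (i : Fin n) : ofRows mu i.castSucc = mu i := ofRows_val mu i
  rw [card_skewCells, ofRows, Finsupp.sum_embDomain, Finsupp.sum_fintype, Fin.sum_univ_castSucc,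
    add_comm]
  · simp only [Finsupp.equivFunOnFinite_symm_apply_apply, Fin.valEmbedding_apply, hlast, hval,
      tsub_zero]
  · exact fun _ => zero_tsub _

theorem skewSchur_ofRows_succ {R : Type*} [CommSemiring R] {lam : Fin (n + 1) → ℕ}
    (hlam : Antitone lam) (x : Fin (n + 1) → R) :
    skewSchur (n + 1) (ofRows lam) 0 x =
      ∑ mu ∈ interlacing lam, x (Fin.last n) ^ (lam (Fin.last n) + ∑ i, (lam i.castSucc - mu i)) *
        skewSchur n (ofRows mu) 0 fun i => x i.castSucc := by
  let shape (mu : Fin n → ℕ) : Finset (ℕ × ℕ) := skewCells (ofRows mu) 0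
  have hshape : Function.Injective shape := skewCells_zero_injective.comp ofRows_injective
  have hmaps : ∀ T ∈ univ.filter (IsSSYT (ofRows lam) 0 (n + 1)),
      belowLast T ∈ (interlacing lam).image shape := by
    intro T hT
    obtain ⟨mu, hmu, hzero, hT⟩ :=
      ((mem_filter_univ T).1 hT).exists_interlaces (isPartition_ofRows hlam)
    rw [← ofRows_eq hzero] at hmu hT
    exact mem_image.2 ⟨_, mem_interlacing_iff_interlaces.2 hmu, hT⟩
  rw [skewSchur, ← sum_fiberwise_of_maps_to hmaps, sum_image hshape.injOn]
  refine sum_congr rfl fun mu hmu => ?_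
  rw [filter_filter, (mem_interlacing_iff_interlaces.1 hmu).sum_isSSYT_belowLast_eq,
    card_skewCells_ofRows]

end Rows

/-! ### The bialternant formula -/

section Alternant

variable {R : Type*} [CommRing R] {n : ℕ}

/-- The alternant `det (x_j ^ (lam_i + n - 1 - i))`, the numerator of the bialternant formula. -/
def alternant (x : Fin n → R) (lam : Fin n → ℕ) : R :=
  Matrix.det (Matrix.of fun i j => x j ^ (lam i + i.rev))

lemma det_eq_of_forall_row_eq_smul_add_succ {A B : Matrix (Fin (n + 1)) (Fin (n + 1)) R}
    (c : Fin n → R) (A_last : ∀ j, A (Fin.last n) j = B (Fin.last n) j)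
    (A_castSucc : ∀ (i : Fin n) (j), A i.castSucc j = B i.castSucc j + c i * A i.succ j) :
    A.det = B.det := by
  rw [← Matrix.det_submatrix_equiv_self Fin.revPerm A,
    ← Matrix.det_submatrix_equiv_self Fin.revPerm B]
  refine Matrix.det_eq_of_forall_row_eq_smul_add_pred (c ∘ Fin.rev) (fun j => ?_) fun i j => ?_
  · simpa using A_last j.rev
  · simpa [Fin.rev_succ, Fin.rev_castSucc] using A_castSucc i.rev j.rev

lemma det_eq_mul_det_castSucc_of_col_last {A : Matrix (Fin (n + 1)) (Fin (n + 1)) R}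
    (hA : ∀ i : Fin n, A i.castSucc (Fin.last n) = 0) :
    A.det = A (Fin.last n) (Fin.last n) * (A.submatrix Fin.castSucc Fin.castSucc).det := by
  rw [Matrix.det_succ_column A (Fin.last n), Fin.sum_univ_castSucc]
  simp [hA, ← two_mul]

lemma det_of_sum {ι : Type*} (s : Fin n → Finset ι) (A : Fin n → Fin n → ι → R) :
    (Matrix.of fun i j => ∑ c ∈ s i, A i j c).det =
      ∑ f ∈ Fintype.piFinset s, (Matrix.of fun i j => A i j (f i)).det := by
  have hrow : (Matrix.of fun i j => ∑ c ∈ s i, A i j c) =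
      Matrix.of fun i => ∑ c ∈ s i, fun j => A i j c := by
    ext i j
    simp
  rw [hrow]
  exact Matrix.detRowAlternating.toMultilinearMap.map_sum_finset (fun i c j => A i j c) s

lemma sub_mul_sum_Icc_pow (x z : R) {a b : ℕ} (hab : a ≤ b) (s : ℕ) :
    (x - z) * ∑ c ∈ Icc a b, z ^ (b - c) * x ^ (c + s) =
      x ^ (b + (s + 1)) - z ^ (b + 1 - a) * x ^ (a + s) := by
  have hgeom : (x - z) * ∑ c ∈ Icc a b, x ^ c * z ^ (b - c) =
      x ^ (b + 1) - x ^ a * z ^ (b + 1 - a) :=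
    mul_geom_sum₂_Ico x z (Nat.le_succ_of_le hab)
  have hshift : ∑ c ∈ Icc a b, z ^ (b - c) * x ^ (c + s) =
      (∑ c ∈ Icc a b, x ^ c * z ^ (b - c)) * x ^ s := by
    rw [sum_mul]
    exact sum_congr rfl fun c _ => by ring
  rw [hshift, ← mul_assoc, hgeom]
  ring

lemma alternant_eq_det_sum {lam : Fin (n + 1) → ℕ} (hlam : Antitone lam) (x : Fin (n + 1) → R) :
    alternant x lam = x (Fin.last n) ^ lam (Fin.last n) * Matrix.det (Matrix.of fun i j : Fin n =>
      (x j.castSucc - x (Fin.last n)) * ∑ c ∈ Icc (lam i.succ) (lam i.castSucc),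
        x (Fin.last n) ^ (lam i.castSucc - c) * x j.castSucc ^ (c + i.rev)) := by
  set z := x (Fin.last n)
  let reduced : Matrix (Fin (n + 1)) (Fin (n + 1)) R := Matrix.of fun i j =>
    Fin.lastCases (x j ^ lam (Fin.last n))
      (fun i => (x j - z) * ∑ c ∈ Icc (lam i.succ) (lam i.castSucc),
        z ^ (lam i.castSucc - c) * x j ^ (c + i.rev)) i
  have hlast (j : Fin (n + 1)) : reduced (Fin.last n) j = x j ^ lam (Fin.last n) := by
    simp [reduced]
  have hrow (i : Fin n) (j : Fin (n + 1)) : reduced i.castSucc j =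
      (x j - z) * ∑ c ∈ Icc (lam i.succ) (lam i.castSucc),
        z ^ (lam i.castSucc - c) * x j ^ (c + i.rev) := by
    simp [reduced]
  have hreduce : alternant x lam = reduced.det := by
    refine det_eq_of_forall_row_eq_smul_add_succ
      (fun i => z ^ (lam i.castSucc + 1 - lam i.succ)) (fun j => ?_) fun i j => ?_
    · simp [hlast]
    · rw [hrow, sub_mul_sum_Icc_pow _ _ (hlam i.castSucc_lt_succ.le)]
      simp only [Matrix.of_apply, Fin.rev_castSucc, Fin.rev_succ, Fin.val_succ, Fin.val_castSucc,
        sub_add_cancel]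
  rw [hreduce, det_eq_mul_det_castSucc_of_col_last fun i => by simp [hrow, z], hlast]
  congr 2
  ext i j
  exact hrow i j.castSucc

/-- Subtracting from each row a multiple of the next one clears the last column and leaves
complete homogeneous sums, which multilinearity expands over the interlacing sequences. -/
theorem alternant_succ {lam : Fin (n + 1) → ℕ} (hlam : Antitone lam) (x : Fin (n + 1) → R) :
    alternant x lam = (∏ j : Fin n, (x j.castSucc - x (Fin.last n))) *
      ∑ mu ∈ interlacing lam, x (Fin.last n) ^ (lam (Fin.last n) + ∑ i, (lam i.castSucc - mu i)) *
        alternant (fun i => x i.castSucc) mu := by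
  have hterm (mu : Fin n → ℕ) : Matrix.det (Matrix.of fun i j : Fin n =>
      x (Fin.last n) ^ (lam i.castSucc - mu i) * x j.castSucc ^ (mu i + i.rev)) =
      x (Fin.last n) ^ (∑ i, (lam i.castSucc - mu i)) * alternant (fun i => x i.castSucc) mu := by
    rw [← prod_pow_eq_pow_sum, alternant, ← Matrix.det_mul_column]
    rfl
  have hfactor := Matrix.det_mul_row (fun j : Fin n => x j.castSucc - x (Fin.last n))
    (Matrix.of fun i j : Fin n => ∑ c ∈ Icc (lam i.succ) (lam i.castSucc),
      x (Fin.last n) ^ (lam i.castSucc - c) * x j.castSucc ^ (c + i.rev))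
  simp only [Matrix.of_apply] at hfactor
  rw [alternant_eq_det_sum hlam, hfactor, det_of_sum, mul_left_comm, mul_sum]
  simp only [hterm, pow_add (x (Fin.last n)), mul_assoc, interlacing]

lemma alternant_zero_succ (x : Fin (n + 1) → R) :
    alternant x 0 = (∏ j : Fin n, (x j.castSucc - x (Fin.last n))) *
      alternant (fun i => x i.castSucc) 0 := by
  rw [alternant_succ (lam := 0) antitone_const, interlacing_zero, sum_singleton]
  simp

theorem skewSchur_ofRows_mul_alternant {lam : Fin n → ℕ} (hlam : Antitone lam) (x : Fin n → R) :
    skewSchur n (ofRows lam) 0 x * alternant x 0 = alternant x lam := by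
  induction n with
  | zero =>
    have hempty : IsEmpty (skewCells (ofRows lam) 0) :=
      ⟨fun c => by simpa [ofRows_of_le lam] using mem_skewCells_zero.1 c.2⟩
    have hall : univ.filter (IsSSYT (ofRows lam) 0 0) = univ :=
      filter_true_of_mem fun _ _ c => isEmptyElim c
    rw [skewSchur, hall]
    simp [alternant]
  | succ n ih =>
    rw [skewSchur_ofRows_succ hlam, alternant_succ hlam, alternant_zero_succ, mul_left_comm,
      sum_mul]
    congr 1
    refine sum_congr rfl fun mu hmu => ?_
    rw [mul_assoc, ih (antitone_of_mem_interlacing hlam hmu)]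

theorem IsPartition.skewSchur_mul_alternant {lam : ℕ →₀ ℕ} (hlam : IsPartition lam)
    (hzero : ∀ i, n ≤ i → lam i = 0) (x : Fin n → R) :
    skewSchur n lam 0 x * alternant x 0 = alternant x fun i => lam i := by
  have hanti : Antitone fun i : Fin n => lam i := fun i j hij => hlam i j hij
  rw [← skewSchur_ofRows_mul_alternant hanti x, ofRows_eq hzero]

end Alternant

/-! ### Rectangles at powers of `q` -/

section Vandermonde

variable {R : Type*} [CommRing R] {k a : ℕ}

lemma det_vandermonde_append (y : Fin k → R) (z : Fin a → R) :
    (Matrix.vandermonde (Fin.append y z)).det =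
      (Matrix.vandermonde y).det * (Matrix.vandermonde z).det * ∏ i, ∏ j, (z j - y i) := by
  have hcross (i : Fin k) (j : Fin a) : Fin.castAdd a i < Fin.natAdd k j :=
    Fin.lt_def.2 (i.2.trans_le (Nat.le_add_right k j))
  simp only [Matrix.det_vandermonde, ← filter_lt_eq_Ioi, prod_filter, Fin.prod_univ_add,
    Fin.append_left, Fin.append_right, prod_mul_distrib, hcross, (hcross _ _).not_gt, if_true,
    if_false, prod_const_one, Fin.natAdd_lt_natAdd_iff, (Fin.strictMono_castAdd a).lt_iff_lt]
  ring

lemma det_vandermonde_const_mul (c : R) (y : Fin k → R) :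
    (Matrix.vandermonde fun i => c * y i).det = c ^ k.choose 2 * (Matrix.vandermonde y).det := by
  have hexp : ∏ j : Fin k, c ^ (j : ℕ) = c ^ k.choose 2 := by
    rw [prod_pow_eq_pow_sum, Fin.sum_univ_eq_sum_range (fun j => j), sum_range_id,
      Nat.choose_two_right]
  rw [← hexp, ← Matrix.det_mul_row]
  congr 1
  ext i j
  exact mul_pow c (y i) j

lemma alternant_pow (q : R) (lam : Fin k → ℕ) :
    alternant (fun j => q ^ (j : ℕ)) lam =
      (Matrix.vandermonde fun i => q ^ (lam i + i.rev)).det := by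
  rw [alternant]
  congr 1
  ext i j
  exact pow_right_comm q j _

end Vandermonde

section Rectangle

open Polynomial

variable {R S : Type*} [CommRing R] [CommRing S] {m k : ℕ}

/-- The polynomial `f_q(v) = v ^ (k choose 2) * ∏ (v q ^ (m - i) - q ^ (m - j))` over
`1 ≤ i ≤ k < j ≤ m`. Up to a factor independent of `p`, its value at `q ^ p` is the bialternant
numerator of `s_{(p^k)}(1, q, …, q ^ (m - 1))`. -/
def rectanglePoly (m k : ℕ) (q : R) : R[X] :=
  X ^ k.choose 2 * ∏ x ∈ Icc 1 k ×ˢ Icc (k + 1) m, (C (q ^ (m - x.1)) * X - C (q ^ (m - x.2)))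

lemma map_rectanglePoly (f : R →+* S) (q : R) :
    (rectanglePoly m k q).map f = rectanglePoly m k (f q) := by
  simp [rectanglePoly, Polynomial.map_prod]

lemma eval_rectanglePoly (q c : R) :
    (rectanglePoly m k q).eval c =
      c ^ k.choose 2 * ∏ x ∈ Icc 1 k ×ˢ Icc (k + 1) m, (q ^ (m - x.1) * c - q ^ (m - x.2)) := by
  simp [rectanglePoly, eval_prod]

lemma eval_one_rectanglePoly (hkm : k ≤ m) (q : R) :
    (rectanglePoly m k q).eval 1 =
      ∏ x ∈ Icc (m - k) (m - 1) ×ˢ range (m - k), (q ^ x.1 - q ^ x.2) := by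
  simp only [eval_rectanglePoly, one_pow, one_mul, mul_one]
  refine prod_nbij' (fun x => (m - x.1, m - x.2)) (fun x => (m - x.1, m - x.2)) ?_ ?_ ?_ ?_ ?_
  all_goals simp only [mem_product, mem_Icc, mem_range, Prod.forall, Prod.mk.injEq, implies_true]
  all_goals omega

lemma prod_Icc_eq_prod_fin {M : Type*} [CommMonoid M] (b n : ℕ) (f : ℕ → M) :
    ∏ i ∈ Icc (b + 1) (b + n), f i = ∏ i : Fin n, f (b + i + 1) := by
  rw [← Ico_add_one_right_eq_Icc, prod_Ico_eq_prod_range, prod_range,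
    show b + n + 1 - (b + 1) = n by omega]
  exact prod_congr rfl fun i _ => congrArg f (Nat.add_right_comm b 1 i)

lemma eval_rectanglePoly_add (k a : ℕ) (q c : R) :
    (rectanglePoly (k + a) k q).eval c =
      c ^ k.choose 2 * ∏ i : Fin k, ∏ j : Fin a, (q ^ (a + i.rev : ℕ) * c - q ^ (j.rev : ℕ)) := by
  have hrow (i : Fin k) : k + a - (0 + i + 1) = a + i.rev := by
    rw [Fin.val_rev]
    omega
  have hcol (j : Fin a) : k + a - (k + j + 1) = j.rev := by
    rw [Fin.val_rev]
    omega
  have hprod := prod_Icc_eq_prod_fin (M := R) 0 k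
  simp only [zero_add 1, zero_add k] at hprod
  simp only [eval_rectanglePoly, prod_product, hprod, prod_Icc_eq_prod_fin k, hrow, hcol]

lemma rectPtn_of_lt (p : ℕ) {i : ℕ} (hi : i < k) : rectPtn k p i = p :=
  if_pos hi

lemma rectPtn_of_le (p : ℕ) {i : ℕ} (hi : k ≤ i) : rectPtn k p i = 0 :=
  if_neg hi.not_gt

lemma rectPtn_zero : rectPtn k 0 = 0 := by
  ext i
  exact ite_self 0

lemma isPartition_rectPtn (k p : ℕ) : IsPartition (rectPtn k p) := by
  intro i j hij
  obtain hj | hj := lt_or_ge j k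
  · rw [rectPtn_of_lt p hj, rectPtn_of_lt p (hij.trans_lt hj)]
  · rw [rectPtn_of_le p hj]
    exact Nat.zero_le _

lemma alternant_pow_rectPtn (q : R) (k a p : ℕ) :
    alternant (fun j : Fin (k + a) => q ^ (j : ℕ)) (fun i => rectPtn k p i) =
      (-1) ^ (k * a) * (Matrix.vandermonde fun i : Fin k => q ^ (a + i.rev : ℕ)).det *
        (Matrix.vandermonde fun j : Fin a => q ^ (j.rev : ℕ)).det *
        (rectanglePoly (k + a) k q).eval (q ^ p) := by
  have hnodes : (fun i : Fin (k + a) => q ^ (rectPtn k p i + i.rev)) =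
      Fin.append (fun i => q ^ p * q ^ (a + i.rev : ℕ)) fun j => q ^ (j.rev : ℕ) := by
    have hrev (j : Fin a) : ((Fin.natAdd k j).rev : ℕ) = j.rev := by
      rw [Fin.val_rev, Fin.val_rev, Fin.val_natAdd]
      omega
    refine (Fin.append_castAdd_natAdd).symm.trans (congrArg₂ Fin.append ?_ ?_) <;> ext i
    · rw [Fin.val_castAdd, rectPtn_of_lt p i.2, ← pow_add, Fin.rev_castAdd, Fin.val_addNat,
        add_comm (i.rev : ℕ)]
    · rw [Fin.val_natAdd, rectPtn_of_le p (Nat.le_add_right k i), zero_add, hrev]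
  have hsign : ∏ i : Fin k, ∏ j : Fin a, (q ^ (j.rev : ℕ) - q ^ p * q ^ (a + i.rev : ℕ)) =
      (-1) ^ (k * a) *
        ∏ i : Fin k, ∏ j : Fin a, (q ^ (a + i.rev : ℕ) * q ^ p - q ^ (j.rev : ℕ)) := by
    simp only [← neg_sub (_ * q ^ p), mul_comm (q ^ p), prod_neg, prod_mul_distrib, card_univ,
      Fintype.card_fin, prod_const, pow_mul']
  rw [alternant_pow, hnodes, det_vandermonde_append, det_vandermonde_const_mul, hsign,
    eval_rectanglePoly_add]
  ring

lemma skewSchur_rectPtn_mul_eval_one_of_injective [IsDomain R] {q : R}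
    (hq : Function.Injective fun n : ℕ => q ^ n) (k a p : ℕ) :
    skewSchur (k + a) (rectPtn k p) 0 (fun i => q ^ (i : ℕ)) *
      (rectanglePoly (k + a) k q).eval 1 = (rectanglePoly (k + a) k q).eval (q ^ p) := by
  have hrow : Function.Injective fun i : Fin k => q ^ (a + i.rev : ℕ) := fun i j hij =>
    Fin.rev_injective (Fin.val_injective (Nat.add_left_cancel (hq hij)))
  have hcol : Function.Injective fun j : Fin a => q ^ (j.rev : ℕ) := fun i j hij =>
    Fin.rev_injective (Fin.val_injective (hq hij))
  have hconst : (-1) ^ (k * a) * (Matrix.vandermonde fun i : Fin k => q ^ (a + i.rev : ℕ)).det *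
      (Matrix.vandermonde fun j : Fin a => q ^ (j.rev : ℕ)).det ≠ 0 :=
    mul_ne_zero (mul_ne_zero (pow_ne_zero _ (neg_ne_zero.2 one_ne_zero))
      (Matrix.det_vandermonde_ne_zero_iff.2 hrow)) (Matrix.det_vandermonde_ne_zero_iff.2 hcol)
  have hbialternant := (isPartition_rectPtn k p).skewSchur_mul_alternant
    (n := k + a) (fun i hi => rectPtn_of_le p ((Nat.le_add_right k a).trans hi))
    fun i => q ^ (i : ℕ)
  have hzero := alternant_pow_rectPtn q k a 0
  simp only [rectPtn_zero, pow_zero] at hzero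
  rw [alternant_pow_rectPtn] at hbialternant
  refine mul_left_cancel₀ hconst ?_
  rw [← hbialternant, mul_left_comm, ← hzero]
  rfl

lemma map_skewSchur (f : R →+* S) (n : ℕ) (lam mu : ℕ →₀ ℕ) (u : Fin n → R) :
    f (skewSchur n lam mu u) = skewSchur n lam mu fun i => f (u i) := by
  simp only [skewSchur, map_sum, map_prod]

theorem skewSchur_rectPtn_mul_eval_one (hkm : k ≤ m) (q : R) (p : ℕ) :
    skewSchur m (rectPtn k p) 0 (fun i => q ^ (i : ℕ)) * (rectanglePoly m k q).eval 1 =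
      (rectanglePoly m k q).eval (q ^ p) := by
  obtain ⟨a, rfl⟩ := Nat.exists_eq_add_of_le hkm
  -- The Vandermonde factors may vanish at `q`, so they are cancelled at the variable of `ℤ[X]`.
  have hX : Function.Injective fun n : ℕ => (X : ℤ[X]) ^ n :=
    Function.LeftInverse.injective natDegree_X_pow
  have hgeneric := congrArg (eval₂RingHom (Int.castRingHom R) q)
    (skewSchur_rectPtn_mul_eval_one_of_injective hX k a p)
  simpa only [map_mul, map_skewSchur, ← eval_map_apply, map_rectanglePoly, map_pow, map_one,
    coe_eval₂RingHom, eval₂_X] using hgeneric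

end Rectangle

lemma hasSum_eval_pow_mul_pow {𝕜 : Type*} [NormedField 𝕜] (f : Polynomial 𝕜) {q t : 𝕜}
    (hq : ‖q‖ ≤ 1) (ht : ‖t‖ < 1) :
    HasSum (fun p => f.eval (q ^ p) * t ^ p)
      (∑ i ∈ range (f.natDegree + 1), f.coeff i / (1 - q ^ i * t)) := by
  have hgeom (i : ℕ) : HasSum (fun p => (q ^ i * t) ^ p) (1 - q ^ i * t)⁻¹ := by
    refine hasSum_geometric_of_norm_lt_one ?_
    rw [norm_mul, norm_pow]
    exact (mul_le_of_le_one_left (norm_nonneg t) (pow_le_one₀ (norm_nonneg q) hq)).trans_lt ht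
  have hterm (p : ℕ) : f.eval (q ^ p) * t ^ p =
      ∑ i ∈ range (f.natDegree + 1), f.coeff i * (q ^ i * t) ^ p := by
    rw [Polynomial.eval_eq_sum_range, sum_mul]
    exact sum_congr rfl fun i _ => by ring
  simp only [hterm, div_eq_mul_inv]
  exact hasSum_sum fun i _ => (hgeom i).mul_left (f.coeff i)

theorem stmt12_general {𝕜 : Type*} [NormedField 𝕜] (m k : ℕ) (hkm : k ≤ m) (q t : 𝕜)
    (hq : ∀ i ∈ Icc (m - k) (m - 1), ∀ j ∈ range (m - k), q ^ i ≠ q ^ j)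
    (hq1 : ‖q‖ ≤ 1) (ht : ‖t‖ < 1) :
    HasSum (fun p : ℕ => skewSchur m (rectPtn k p) 0 (fun i => q ^ (i : ℕ)) * t ^ p)
      ((∏ x ∈ Icc (m - k) (m - 1) ×ˢ range (m - k), (q ^ x.1 - q ^ x.2)⁻¹) *
        ∑ i ∈ range ((rectanglePoly m k q).natDegree + 1),
          (rectanglePoly m k q).coeff i / (1 - q ^ i * t)) := by
  have hden : (rectanglePoly m k q).eval 1 ≠ 0 := by
    rw [eval_one_rectanglePoly hkm, prod_ne_zero_iff]
    exact fun x hx => sub_ne_zero.2 (hq _ (mem_product.1 hx).1 _ (mem_product.1 hx).2)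
  rw [prod_inv_distrib, ← eval_one_rectanglePoly hkm]
  refine ((hasSum_eval_pow_mul_pow (rectanglePoly m k q) hq1 ht).mul_left _).congr_fun fun p => ?_
  rw [← skewSchur_rectPtn_mul_eval_one hkm]
  field_simp

/-- with `f_q(v) = v^{C(k,2)} ∏_{1 ≤ i ≤ k < j ≤ m} (v q^{m-i} - q^{m-j})
= ∑_i a_i(q) v^i`, one has
`∑_{p≥0} s_{(p^k)}(1,q,…,q^{m-1}) t^p
  = (∏_{m-k ≤ i < m, 0 ≤ j < m-k} 1/(q^i - q^j)) · ∑_i a_i(q)/(1 - q^i t)`. -/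
theorem stmt12 (m k : ℕ) (hk : 0 < k) (hkm : k ≤ m) (q t : ℝ)
    (hq0 : 0 < q) (hq1 : q < 1) (ht : |t| < 1) :
    (∑' p : ℕ, skewSchur m (rectPtn k p) 0 (fun i => q ^ (i : ℕ)) * t ^ p) =
      (∏ x ∈ (Finset.Icc (m - k) (m - 1)) ×ˢ (Finset.range (m - k)),
          (q ^ x.1 - q ^ x.2)⁻¹) *
        ∑ i ∈ Finset.range
            ((Polynomial.X ^ (k.choose 2) *
              ∏ x ∈ (Finset.Icc 1 k) ×ˢ (Finset.Icc (k + 1) m),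
                (Polynomial.C (q ^ (m - x.1)) * Polynomial.X -
                  Polynomial.C (q ^ (m - x.2)))).natDegree + 1),
          (Polynomial.X ^ (k.choose 2) *
              ∏ x ∈ (Finset.Icc 1 k) ×ˢ (Finset.Icc (k + 1) m),
                (Polynomial.C (q ^ (m - x.1)) * Polynomial.X -
                  Polynomial.C (q ^ (m - x.2)))).coeff i / (1 - q ^ i * t) := by
  have hpow : Function.Injective fun n : ℕ => q ^ n :=
    (pow_right_strictAnti₀ hq0 hq1).injective
  refine (stmt12_general m k hkm q t (fun i hi j hj => hpow.ne ?_) ?_ ht).tsum_eq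
  · exact ((mem_range.1 hj).trans_le (mem_Icc.1 hi).1).ne'
  · exact (Real.norm_of_nonneg hq0.le).trans_le hq1.le
end
end
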